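/- Let A ⊆ ℝ^m be a set with 0 < |A| < +∞ (Lebesgue measure). If there is a net of smooth sets U_α ⊂⊂ A such that χ_{U_α} → χ_A in L_1(ℝ^m) and sup_α P(U_α) < +∞, then H^{m-1}(∂A \ ext_* A) < +∞. -/

import Mathlib

/-- A directed, nonempty index type, used to formalize nets. -/
structure DirIdx where
  ι : Type
  [pre : Preorder ι]
  [ne : Nonempty ι]
  [dir : IsDirected ι fun a b => a ≤ b]

attribute [instance] DirIdx.pre DirIdx.ne DirIdx.dir

open MeasureTheory Filter Topology Metric Set
open scoped ENNReal RealInnerProductSpace symmDiff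

noncomputable section

abbrev Euc (m : ℕ) := EuclideanSpace ℝ (Fin m)

/-- Pointwise divergence of a vector field on `ℝ^m`. -/
def pdiv {m : ℕ} (φ : Euc m → Euc m) (x : Euc m) : ℝ :=
  ∑ i, ⟪fderiv ℝ φ x (EuclideanSpace.single i 1), EuclideanSpace.single i (1 : ℝ)⟫

/-- The measure-theoretic exterior of `A`: points of Lebesgue density zero. -/
def extMeas {m : ℕ} (A : Set (Euc m)) : Set (Euc m) :=
  {x | Tendsto (fun r : ℝ => volume (A ∩ closedBall x r) / volume (closedBall x r))
      (𝓝[>] (0 : ℝ)) (𝓝 0)}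

/-- The perimeter `P(V; W)` of `V` relative to the open set `W` (valued in `ℝ≥0∞`). -/
def perimeter {m : ℕ} (V W : Set (Euc m)) : ℝ≥0∞ :=
  ⨆ (φ : Euc m → Euc m) (_ : ContDiff ℝ 1 φ) (_ : HasCompactSupport φ)
    (_ : tsupport φ ⊆ W) (_ : ∀ x, ‖φ x‖ ≤ 1),
    ENNReal.ofReal (∫ x in V, pdiv φ x)

/-- A smooth set: a bounded open set with `C^∞` boundary. -/
def IsSmoothSet {m : ℕ} (V : Set (Euc m)) : Prop :=
  IsOpen V ∧ Bornology.IsBounded V ∧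
  ∀ x ∈ frontier V, ∃ (W : Set (Euc m)) (f : Euc m → ℝ), IsOpen W ∧ x ∈ W ∧
    ContDiff ℝ (⊤ : ℕ∞) f ∧ (∀ y ∈ W, fderiv ℝ f y ≠ 0) ∧ V ∩ W = {y | f y < 0} ∩ W

/-!
Let `U` be the union of the approximating sets. It is open, it agrees with `A` almost everywhere,
and its indicator function is an `L^1` limit of smooth cutoff functions whose total variation is
bounded by the common bound on the perimeters. A point `x` of `∂A` lies in none of the approximating
sets, and as their boundaries are smooth, each of them has density at most `1 - 4^{-m}` in small
balls around `x`. Fix a small `κ > 0` and let `x` be non-exterior.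

* If the density of `U` around `x` lies in `[κ, 1 - κ]` at arbitrarily small scales `r`, then by the
  relative isoperimetric inequality the variation in the ball is at least a multiple of `r^{m-1}`,
  and the Vitali covering theorem shows that these points form a set of finite measure.
* If that density is eventually greater than `1 - κ`, choose one approximating set that misses only
  a tiny part of `U`. Its density around `x` is large at a prescribed scale `δ` but not at much
  smaller ones, so it crosses `[κ, 1 - κ]` below `δ`, and the previous argument applies to it with
  constants independent of `δ`.
* If that density is eventually less than `κ` but does not tend to `0`, it is of some order `τ` at
  arbitrarily small scales. In such a ball the Sobolev inequality yields variation of order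
  `τ^{(m-1)/m} r^{m-1}`, while cutting the ball out creates only `τ r^{m-1}`. Cutting out disjoint
  balls of this kind, which changes `U` little, thus gains a multiple of `∑ r^{m-1}`; for an almost
  minimal cutoff function this sum must be small, so these points form a null set.
-/

section Preliminaries

theorem le_of_forall_pos_le_mul_add {a b c : ℝ} (h : ∀ ε > 0, a ≤ ε * b + c) : a ≤ c := by
  have hlim : Tendsto (fun ε : ℝ => ε * b + c) (𝓝[>] 0) (𝓝 (0 * b + c)) :=
    ((continuous_id.mul_const b).add_const c).continuousWithinAt
  rw [zero_mul, zero_add] at hlim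
  exact ge_of_tendsto hlim (eventually_mem_nhdsWithin.mono h)

theorem sum_setIntegral_le_integral {α ι : Type*} [MeasurableSpace α] {μ : Measure α}
    {F : Finset ι} {s : ι → Set α} {g : α → ℝ} (hs : ∀ i ∈ F, MeasurableSet (s i))
    (hdisj : (F : Set ι).PairwiseDisjoint s) (hg : Integrable g μ) (hg0 : 0 ≤ g) :
    ∑ i ∈ F, ∫ x in s i, g x ∂μ ≤ ∫ x, g x ∂μ := by
  rw [← integral_biUnion_finset F hs hdisj fun _ _ => hg.integrableOn]
  exact setIntegral_le_integral hg (Eventually.of_forall hg0)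

theorem eventually_mul_lt_mul_rpow {a p : ℝ} (ha : 0 < a) (hp : p < 1) (b : ℝ) :
    ∀ᶠ s : ℝ in 𝓝[>] 0, b * s < a * s ^ p := by
  have hlim : Tendsto (fun s : ℝ => b * s ^ (1 - p)) (𝓝[>] 0) (𝓝 0) := by
    have := ((Real.continuousAt_rpow_const 0 (1 - p) (.inr (by linarith))).const_mul b).tendsto
    rw [Real.zero_rpow (by linarith), mul_zero] at this
    exact this.mono_left nhdsWithin_le_nhds
  filter_upwards [hlim.eventually (gt_mem_nhds ha), self_mem_nhdsWithin] with s hs hs0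
  calc b * s = b * s ^ (1 - p) * s ^ p := by
        rw [mul_assoc, ← Real.rpow_add hs0, sub_add_cancel, Real.rpow_one]
    _ < a * s ^ p := by have := Real.rpow_pos_of_pos hs0 p; gcongr

end Preliminaries

section HausdorffMeasure

variable {X : Type*} [MetricSpace X]

theorem ediam_closedBall_le_ofReal_two_mul (x : X) (r : ℝ) :
    ediam (closedBall x r) ≤ ENNReal.ofReal (2 * r) :=
  ediam_le_of_forall_dist_le fun y hy z hz => by
    linarith [dist_triangle_right y z x, mem_closedBall.1 hy, mem_closedBall.1 hz]

variable [TopologicalSpace.SeparableSpace X] {S : Set X} {p M : ℝ}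

theorem exists_countable_cover_of_packing {r : X → ℝ} {δ : ℝ} (hp : 0 ≤ p)
    (hr : ∀ x ∈ S, r x ∈ Ioc 0 δ)
    (hpack : ∀ F : Finset X, (F : Set X) ⊆ S →
      (F : Set X).PairwiseDisjoint (fun x => closedBall x (r x)) → ∑ x ∈ F, r x ^ p ≤ M) :
    ∃ T : Set X, T.Countable ∧ T ⊆ S ∧ S ⊆ ⋃ x : T, closedBall x.1 (4 * r x) ∧
      ∑' x : T, ediam (closedBall x.1 (4 * r x)) ^ p ≤ ENNReal.ofReal (8 ^ p * M) := by
  obtain ⟨T, hTS, hdisj, hcover⟩ :=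
    Vitali.exists_disjoint_subfamily_covering_enlargement_closedBall S (fun x => x) r δ
      (fun x hx => (hr x hx).2) 4 (by norm_num)
  refine ⟨T, hdisj.countable_of_nonempty_interior fun x hx =>
    ⟨x, ball_subset_interior_closedBall (mem_ball_self (hr x (hTS hx)).1)⟩, hTS, fun x hx => ?_, ?_⟩
  · obtain ⟨y, hy, hsub⟩ := hcover x hx
    exact mem_iUnion.2 ⟨⟨y, hy⟩, hsub (mem_closedBall_self (hr x hx).1.le)⟩
  rw [ENNReal.tsum_eq_iSup_sum]
  refine iSup_le fun F => ?_
  have hpos (x : T) : 0 < r x := (hr x (hTS x.2)).1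
  calc ∑ x ∈ F, ediam (closedBall x.1 (4 * r x)) ^ p
      ≤ ∑ x ∈ F, ENNReal.ofReal (8 ^ p * r x ^ p) := Finset.sum_le_sum fun x _ => by
        rw [← Real.mul_rpow (by norm_num) (hpos x).le,
          ← ENNReal.ofReal_rpow_of_nonneg (by linarith [hpos x]) hp]
        gcongr
        exact (ediam_closedBall_le_ofReal_two_mul _ _).trans_eq (by ring_nf)
    _ = ENNReal.ofReal (8 ^ p * ∑ x ∈ F, r x ^ p) := by
        rw [Finset.mul_sum, ENNReal.ofReal_sum_of_nonneg fun x _ => by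
          have := hpos x; positivity]
    _ ≤ ENNReal.ofReal (8 ^ p * M) := by
        have hsum := hpack (F.map (Function.Embedding.subtype _))
          (fun x hx => by
            obtain ⟨y, -, rfl⟩ := Finset.mem_map.1 hx
            exact hTS y.2)
          (hdisj.subset fun x hx => by
            obtain ⟨y, -, rfl⟩ := Finset.mem_map.1 hx
            exact y.2)
        rw [Finset.sum_map] at hsum
        simp only [Function.Embedding.subtype_apply] at hsum
        gcongr

theorem hausdorffMeasure_le_of_packing [MeasurableSpace X] [BorelSpace X] (hp : 0 ≤ p)
    (hpack : ∃ᶠ δ in 𝓝[>] (0 : ℝ), ∃ r : X → ℝ, (∀ x ∈ S, r x ∈ Ioc 0 δ) ∧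
      ∀ F : Finset X, (F : Set X) ⊆ S →
        (F : Set X).PairwiseDisjoint (fun x => closedBall x (r x)) → ∑ x ∈ F, r x ^ p ≤ M) :
    μH[p] S ≤ ENNReal.ofReal (8 ^ p * M) := by
  obtain ⟨δ, hδ, hr⟩ := exists_seq_forall_of_frequently hpack
  choose r hr hsum using hr
  choose T hTc hTS hcover htsum using fun n =>
    exists_countable_cover_of_packing hp (hr n) (hsum n)
  have (n : ℕ) : Countable (T n) := (hTc n).to_subtype
  have hdiam : Tendsto (fun n => ENNReal.ofReal (8 * δ n)) atTop (𝓝 0) := by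
    have := ENNReal.tendsto_ofReal ((tendsto_nhds_of_tendsto_nhdsWithin hδ).const_mul 8)
    rwa [mul_zero, ENNReal.ofReal_zero] at this
  calc μH[p] S
      ≤ liminf (fun n => ∑' x : T n, ediam (closedBall x.1 (4 * r n x)) ^ p) atTop :=
        Measure.hausdorffMeasure_le_liminf_tsum p S _ hdiam _
          (Eventually.of_forall fun n x => (ediam_closedBall_le_ofReal_two_mul _ _).trans
            (ENNReal.ofReal_le_ofReal (by linarith [(hr n x (hTS n x.2)).2])))
          (Eventually.of_forall hcover)
    _ ≤ liminf (fun _ : ℕ => ENNReal.ofReal (8 ^ p * M)) atTop :=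
        liminf_le_liminf (Eventually.of_forall htsum)
    _ = ENNReal.ofReal (8 ^ p * M) := liminf_const _

end HausdorffMeasure

section Poincare

open Module (finrank)

variable {E : Type*} [NormedAddCommGroup E] [NormedSpace ℝ E]
  {F : Type*} [NormedAddCommGroup F] [NormedSpace ℝ F] {u : E → F} {s : Set E}

theorem enorm_sub_midpoint_le_lintegral [CompleteSpace F] (hu : ContDiff ℝ 1 u) (a b : E) :
    ‖u b - u (midpoint ℝ b a)‖ₑ ≤
      edist a b * ∫⁻ t in Ioc (0 : ℝ) (1 / 2), ‖fderiv ℝ u (AffineMap.lineMap b a t)‖ₑ := by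
  have hderiv (t : ℝ) : HasDerivAt (fun t : ℝ => u (AffineMap.lineMap b a t))
      (fderiv ℝ u (AffineMap.lineMap b a t) (a - b)) t :=
    (hu.differentiable one_ne_zero _).hasFDerivAt.comp_hasDerivAt t AffineMap.hasDerivAt_lineMap
  have hcont : Continuous fun t : ℝ => fderiv ℝ u (AffineMap.lineMap b a t) (a - b) :=
    ((hu.continuous_fderiv one_ne_zero).comp AffineMap.lineMap_continuous).clm_apply
      continuous_const
  have hftc : u (midpoint ℝ b a) - u b =
      ∫ t in Ioc (0 : ℝ) (1 / 2), fderiv ℝ u (AffineMap.lineMap b a t) (a - b) := by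
    rw [← intervalIntegral.integral_of_le (by norm_num),
      intervalIntegral.integral_eq_sub_of_hasDerivAt (fun t _ => hderiv t)
        (hcont.intervalIntegrable _ _), AffineMap.lineMap_apply_zero, midpoint, invOf_eq_inv,
      one_div]
  rw [← enorm_neg, neg_sub, hftc, edist_eq_enorm_sub, mul_comm, ← lintegral_mul_const'
    _ _ enorm_ne_top]
  exact (enorm_integral_le_lintegral_enorm _).trans
    (lintegral_mono fun t => ContinuousLinearMap.le_opENorm _ _)

variable [FiniteDimensional ℝ E] [MeasurableSpace E] [BorelSpace E] (μ : Measure E)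
  [μ.IsAddHaarMeasure]

theorem setLIntegral_comp_lineMap_le (hs : Convex ℝ s) (hsm : MeasurableSet s) {a : E} (ha : a ∈ s)
    {t : ℝ} (ht : t ∈ Icc (0 : ℝ) (1 / 2)) {g : E → ℝ≥0∞} (hg : Measurable g) :
    ∫⁻ b in s, g (AffineMap.lineMap b a t) ∂μ ≤
      2 ^ finrank ℝ E * ∫⁻ x in s, g x ∂μ := by
  obtain ⟨ht0, ht1⟩ := ht
  have h1t : (0 : ℝ) < 1 - t := by linarith
  set G := s.indicator g
  have hG : Measurable G := hg.indicator hsm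
  calc ∫⁻ b in s, g (AffineMap.lineMap b a t) ∂μ
      ≤ ∫⁻ b, G ((1 - t) • b + t • a) ∂μ := by
        rw [← lintegral_indicator hsm]
        refine lintegral_mono fun b => indicator_apply_le' (fun hb => ?_) fun _ => zero_le
        rw [AffineMap.lineMap_apply_module]
        exact (indicator_of_mem (hs hb ha h1t.le ht0 (sub_add_cancel 1 t)) g).ge
    _ = ∫⁻ x, G (x + t • a) ∂(μ.map fun b => (1 - t) • b) :=
        (lintegral_map (hG.comp (measurable_add_const _)) (measurable_const_smul _)).symm
    _ = ENNReal.ofReal |((1 - t) ^ finrank ℝ E)⁻¹| * ∫⁻ x in s, g x ∂μ := by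
        rw [Measure.map_addHaar_smul _ h1t.ne', lintegral_smul_measure,
          lintegral_add_right_eq_self, lintegral_indicator hsm, smul_eq_mul]
    _ ≤ 2 ^ finrank ℝ E * ∫⁻ x in s, g x ∂μ := by
        gcongr
        rw [abs_of_pos (by positivity), ← inv_pow, ENNReal.ofReal_pow (by positivity)]
        gcongr
        rw [ENNReal.ofReal_le_ofNat]
        exact inv_le_of_inv_le₀ two_pos (by linarith)

variable [CompleteSpace F]

theorem lintegral_enorm_sub_midpoint_le (hu : ContDiff ℝ 1 u) (hs : Convex ℝ s)
    (hsm : MeasurableSet s) :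
    ∫⁻ a in s, ∫⁻ b in s, ‖u b - u (midpoint ℝ b a)‖ₑ ∂μ ∂μ ≤
      2 ^ finrank ℝ E * ediam s * μ s * (∫⁻ x in s, ‖fderiv ℝ u x‖ₑ ∂μ) / 2 := by
  have hdu : Continuous (fderiv ℝ u) := hu.continuous_fderiv one_ne_zero
  have hinner (a : E) (ha : a ∈ s) : ∫⁻ b in s, ‖u b - u (midpoint ℝ b a)‖ₑ ∂μ ≤
      ediam s * ∫⁻ _t in Ioc (0 : ℝ) (1 / 2),
        2 ^ finrank ℝ E * ∫⁻ x in s, ‖fderiv ℝ u x‖ₑ ∂μ := by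
    have hmeas : Measurable fun p : E × ℝ => ‖fderiv ℝ u (AffineMap.lineMap p.1 a p.2)‖ₑ := by
      simp only [AffineMap.lineMap_apply_module]
      exact Continuous.measurable (by fun_prop)
    calc ∫⁻ b in s, ‖u b - u (midpoint ℝ b a)‖ₑ ∂μ
        ≤ ∫⁻ b in s, ediam s *
            (∫⁻ t in Ioc (0 : ℝ) (1 / 2), ‖fderiv ℝ u (AffineMap.lineMap b a t)‖ₑ) ∂μ :=
          setLIntegral_mono' hsm fun b hb => (enorm_sub_midpoint_le_lintegral hu a b).trans
            (by gcongr; exact edist_le_ediam_of_mem ha hb)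
      _ = ediam s * ∫⁻ t in Ioc (0 : ℝ) (1 / 2),
            ∫⁻ b in s, ‖fderiv ℝ u (AffineMap.lineMap b a t)‖ₑ ∂μ := by
          rw [lintegral_const_mul _ hmeas.lintegral_prod_right',
            lintegral_lintegral_swap hmeas.aemeasurable]
      _ ≤ _ := by
          gcongr ediam s * ?_
          exact setLIntegral_mono' measurableSet_Ioc fun t ht =>
            setLIntegral_comp_lineMap_le μ hs hsm ha (Ioc_subset_Icc_self ht) hdu.enorm.measurable
  refine (setLIntegral_mono' hsm hinner).trans_eq ?_
  rw [setLIntegral_const, setLIntegral_const, Real.volume_Ioc, sub_zero, ENNReal.div_eq_inv_mul,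
    one_div, ENNReal.ofReal_inv_of_pos two_pos, ENNReal.ofReal_ofNat]
  ring

theorem lintegral_enorm_sub_le_of_convex (hu : ContDiff ℝ 1 u) (hs : Convex ℝ s)
    (hsm : MeasurableSet s) :
    ∫⁻ a in s, ∫⁻ b in s, ‖u b - u a‖ₑ ∂μ ∂μ ≤
      2 ^ finrank ℝ E * ediam s * μ s * ∫⁻ x in s, ‖fderiv ℝ u x‖ₑ ∂μ := by
  set h : E × E → ℝ≥0∞ := fun p => ‖u p.2 - u (midpoint ℝ p.2 p.1)‖ₑ
  have hmeas : Measurable h := by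
    have := hu.continuous
    simp only [h, midpoint_eq_smul_add]
    exact Continuous.measurable (by fun_prop)
  have htri (a b : E) : ‖u b - u a‖ₑ ≤ h (a, b) + h (b, a) := by
    simp only [h, midpoint_comm (R := ℝ) b a]
    rw [← sub_sub_sub_cancel_right (u b) (u a) (u (midpoint ℝ a b))]
    exact enorm_sub_le
  calc ∫⁻ a in s, ∫⁻ b in s, ‖u b - u a‖ₑ ∂μ ∂μ
      ≤ ∫⁻ a in s, ∫⁻ b in s, h (a, b) + h (b, a) ∂μ ∂μ :=
        lintegral_mono fun a => lintegral_mono fun b => htri a b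
    _ = ∫⁻ a in s, ∫⁻ b in s, h (a, b) ∂μ ∂μ + ∫⁻ a in s, ∫⁻ b in s, h (b, a) ∂μ ∂μ := by
        rw [← lintegral_add_left hmeas.lintegral_prod_right']
        exact lintegral_congr fun a => lintegral_add_left (hmeas.comp measurable_prodMk_left) _
    _ = ∫⁻ a in s, ∫⁻ b in s, h (a, b) ∂μ ∂μ + ∫⁻ a in s, ∫⁻ b in s, h (a, b) ∂μ ∂μ := by
        rw [lintegral_lintegral_swap (f := fun a b => h (b, a))
          (hmeas.comp measurable_swap).aemeasurable]
    _ ≤ _ := (add_le_add (lintegral_enorm_sub_midpoint_le μ hu hs hsm)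
        (lintegral_enorm_sub_midpoint_le μ hu hs hsm)).trans_eq (ENNReal.add_halves _)

end Poincare

section Density

open Module (finrank)

variable {E : Type*} [NormedAddCommGroup E] [MeasurableSpace E]

/-- The proportion of the closed ball of radius `r` around `x` that is occupied by `W`. It is only
meaningful for `0 < r`. -/
def ballDensity (μ : Measure E) (W : Set E) (x : E) (r : ℝ) : ℝ :=
  μ.real (W ∩ closedBall x r) / μ.real (closedBall x r)

theorem ballDensity_nonneg (μ : Measure E) (W : Set E) (x : E) (r : ℝ) :
    0 ≤ ballDensity μ W x r := by
  unfold ballDensity; positivity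

variable [NormedSpace ℝ E] [FiniteDimensional ℝ E] (μ : Measure E) [μ.IsAddHaarMeasure]
  {V W : Set E} {x : E} {r s κ : ℝ}

theorem measureReal_closedBall_pos (x : E) (hr : 0 < r) : 0 < μ.real (closedBall x r) :=
  ENNReal.toReal_pos (measure_closedBall_pos μ x hr).ne' measure_closedBall_lt_top.ne

theorem measureReal_inter_closedBall (W : Set E) (x : E) (hr : 0 < r) :
    μ.real (W ∩ closedBall x r) = ballDensity μ W x r * μ.real (closedBall x r) :=
  (div_mul_cancel₀ _ (measureReal_closedBall_pos μ x hr).ne').symm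

theorem measureReal_closedBall_sdiff (hW : MeasurableSet W) (x : E) (hr : 0 < r) :
    μ.real (closedBall x r \ W) = (1 - ballDensity μ W x r) * μ.real (closedBall x r) := by
  rw [sub_mul, one_mul, ← measureReal_inter_closedBall μ W x hr, inter_comm, eq_sub_iff_add_eq']
  exact measureReal_inter_add_sdiff hW measure_closedBall_lt_top.ne

theorem ballDensity_le_add_of_measureReal_sdiff_le {A : Set E} {η : ℝ} (hr : 0 < r)
    (hfin : μ (A \ V) ≠ ⊤) (h : μ.real (A \ V) ≤ η * μ.real (closedBall x r)) :
    ballDensity μ A x r ≤ ballDensity μ V x r + η := by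
  have hB := measureReal_closedBall_pos μ x hr
  have hsub : A ∩ closedBall x r ⊆ V ∩ closedBall x r ∪ A \ V := fun y hy => by
    by_cases hyV : y ∈ V
    exacts [.inl ⟨hyV, hy.2⟩, .inr ⟨hy.1, hyV⟩]
  have hVfin : μ (V ∩ closedBall x r) ≠ ⊤ :=
    measure_ne_top_of_subset inter_subset_right measure_closedBall_lt_top.ne
  have hle := (measureReal_mono hsub (measure_union_lt_top hVfin.lt_top hfin.lt_top).ne).trans
    (measureReal_union_le _ _)
  rw [measureReal_inter_closedBall μ A x hr, measureReal_inter_closedBall μ V x hr] at hle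
  refine le_of_mul_le_mul_right ?_ hB
  linarith

variable [BorelSpace E]

theorem measureReal_closedBall_eq_rpow (x : E) (hr : 0 < r) :
    μ.real (closedBall x r) =
      μ.real (closedBall (0 : E) 1) * (r ^ ((finrank ℝ E : ℝ) - 1) * r) := by
  rw [Measure.addHaar_real_closedBall' μ x hr.le, Real.rpow_sub_one hr.ne', Real.rpow_natCast,
    div_mul_cancel₀ _ hr.ne', mul_comm]

theorem measureReal_closedBall_two_mul (x : E) (hr : 0 ≤ r) :
    μ.real (closedBall x (2 * r)) = 2 ^ finrank ℝ E * μ.real (closedBall x r) := by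
  rw [Measure.addHaar_real_closedBall' μ x hr, Measure.addHaar_real_closedBall' μ x (by positivity),
    mul_pow, mul_assoc]

theorem continuousOn_ballDensity (W : Set E) (x : E) :
    ContinuousOn (ballDensity μ W x) (Ioi 0) := by
  have hball : ContinuousOn (fun r => μ.real (closedBall x r)) (Ioi 0) :=
    ContinuousOn.congr (f := fun r => r ^ finrank ℝ E * μ.real (closedBall (0 : E) 1))
      (by fun_prop) fun r hr => Measure.addHaar_real_closedBall' μ x hr.le
  have hdist (r s : ℝ) : dist (μ.real (W ∩ closedBall x r)) (μ.real (W ∩ closedBall x s)) ≤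
      dist (μ.real (closedBall x r)) (μ.real (closedBall x s)) := by
    wlog hrs : s ≤ r generalizing r s
    · rw [dist_comm, dist_comm (μ.real (closedBall x r))]
      exact this s r (le_of_not_ge hrs)
    have hsub : closedBall x s ⊆ closedBall x r := closedBall_subset_closedBall hrs
    have hfin (t : ℝ) : μ (W ∩ closedBall x t) ≠ ⊤ :=
      measure_ne_top_of_subset inter_subset_right measure_closedBall_lt_top.ne
    rw [Real.dist_eq, Real.dist_eq,
      abs_of_nonneg (sub_nonneg.2 (measureReal_mono (inter_subset_inter_right W hsub) (hfin r))),
      abs_of_nonneg (sub_nonneg.2 (measureReal_mono hsub measure_closedBall_lt_top.ne)),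
      ← measureReal_sdiff hsub measurableSet_closedBall measure_closedBall_lt_top.ne,
      sub_le_iff_le_add]
    refine (measureReal_mono ?_ (measure_union_lt_top ?_ (hfin s).lt_top).ne).trans
      (measureReal_union_le _ _)
    · intro y hy
      by_cases hys : y ∈ closedBall x s
      exacts [.inr ⟨hy.1, hys⟩, .inl ⟨hy.2, hys⟩]
    · exact measure_lt_top_of_subset sdiff_subset measure_closedBall_lt_top.ne
  refine ContinuousOn.div (fun r hr => ?_) hball fun r hr => (measureReal_closedBall_pos μ x hr).ne'
  exact tendsto_iff_dist_tendsto_zero.2 (squeeze_zero (fun _ => dist_nonneg)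
    (fun s => hdist s r) (tendsto_iff_dist_tendsto_zero.1 (hball r hr)))

end Density

section RelaxedPerimeter

variable {E : Type*} [NormedAddCommGroup E] [NormedSpace ℝ E]

/-- The smooth competitors for the indicator functions of sets of finite measure: compactly
supported `C^1` functions with values in `[0, 1]`. -/
structure IsCutoff (u : E → ℝ) : Prop where
  contDiff : ContDiff ℝ 1 u
  hasCompactSupport : HasCompactSupport u
  mem_Icc (x : E) : u x ∈ Icc (0 : ℝ) 1

theorem IsCutoff.norm_le_one {u : E → ℝ} (hu : IsCutoff u) (x : E) : ‖u x‖ ≤ 1 := by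
  rw [Real.norm_of_nonneg (hu.mem_Icc x).1]
  exact (hu.mem_Icc x).2

theorem IsCutoff.continuous_fderiv {u : E → ℝ} (hu : IsCutoff u) : Continuous (fderiv ℝ u) :=
  hu.contDiff.continuous_fderiv one_ne_zero

variable [MeasurableSpace E]

/-- The total variation of a `C^1` function (`0` if its derivative is not integrable). -/
def totalVariation (μ : Measure E) (u : E → ℝ) : ℝ := ∫ x, ‖fderiv ℝ u x‖ ∂μ

/-- The distance in `L^1` between a function and the indicator function of a set. -/
def indicatorDist (μ : Measure E) (u : E → ℝ) (W : Set E) : ℝ := ∫ x, ‖u x - W.indicator 1 x‖ ∂μ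

/-- The relaxed form of the bound `P` on the perimeter of `W`: the indicator function of `W` is a
limit in `L^1` of cutoff functions of total variation at most `P`. -/
def HasRelaxedPerimeterLE (μ : Measure E) (W : Set E) (P : ℝ) : Prop :=
  ∀ η > 0, ∃ u, IsCutoff u ∧ indicatorDist μ u W ≤ η ∧ totalVariation μ u ≤ P

variable {μ : Measure E} {u : E → ℝ} {W : Set E} {P : ℝ}

theorem totalVariation_nonneg : 0 ≤ totalVariation μ u := integral_nonneg fun _ => norm_nonneg _

theorem indicatorDist_nonneg {α : Type*} [MeasurableSpace α] {μ : Measure α} {u : α → ℝ}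
    {W : Set α} : 0 ≤ indicatorDist μ u W :=
  integral_nonneg fun _ => norm_nonneg _

theorem HasRelaxedPerimeterLE.nonneg (h : HasRelaxedPerimeterLE μ W P) : 0 ≤ P := by
  obtain ⟨u, -, -, hu⟩ := h 1 one_pos
  exact totalVariation_nonneg.trans hu

theorem integrable_indicator_one {α : Type*} [MeasurableSpace α] {μ : Measure α} {W : Set α}
    (hW : MeasurableSet W) (hfin : μ W ≠ ⊤) : Integrable (W.indicator (1 : α → ℝ)) μ :=
  (integrable_indicator_iff hW).2 (integrableOn_const hfin)

section IndicatorDist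

variable [OpensMeasurableSpace E] [IsFiniteMeasureOnCompacts μ]

namespace IsCutoff

theorem integrable (hu : IsCutoff u) : Integrable u μ :=
  hu.contDiff.continuous.integrable_of_hasCompactSupport hu.hasCompactSupport

theorem integrable_fderiv (hu : IsCutoff u) : Integrable (fderiv ℝ u) μ :=
  hu.continuous_fderiv.integrable_of_hasCompactSupport (hu.hasCompactSupport.fderiv ℝ)

theorem integrable_sub_indicator (hu : IsCutoff u) (hW : MeasurableSet W) (hfin : μ W ≠ ⊤) :
    Integrable (fun x => u x - W.indicator 1 x) μ :=
  hu.integrable.sub (integrable_indicator_one hW hfin)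

theorem indicatorDist_le_add {A V : Set E} (hu : IsCutoff u)
    (hA : MeasurableSet A) (hAfin : μ A ≠ ⊤) (hV : MeasurableSet V) (hVfin : μ V ≠ ⊤) :
    indicatorDist μ u A ≤ indicatorDist μ u V + μ.real (V ∆ A) := by
  have hD : MeasurableSet (V ∆ A) := hV.symmDiff hA
  have hint := integrable_indicator_one hD (measure_symmDiff_ne_top hVfin hAfin)
  rw [← integral_indicator_one hD, indicatorDist, indicatorDist,
    ← integral_add (hu.integrable_sub_indicator hV hVfin).norm hint]
  refine integral_mono (hu.integrable_sub_indicator hA hAfin).norm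
    ((hu.integrable_sub_indicator hV hVfin).norm.add hint) fun x => ?_
  have h0 : 0 ≤ u x := (hu.mem_Icc x).1
  have h1 : u x ≤ 1 := (hu.mem_Icc x).2
  by_cases hxV : x ∈ V <;> by_cases hxA : x ∈ A <;>
    simp [hxV, hxA, mem_symmDiff, abs_of_nonneg, abs_of_nonpos, h0, h1] <;> linarith

end IsCutoff

theorem HasRelaxedPerimeterLE.of_forall_exists_measureReal_symmDiff_le {ι : Type*} {A : Set E}
    {V : ι → Set E} (hA : MeasurableSet A)
    (hAfin : μ A ≠ ⊤) (hVm : ∀ i, MeasurableSet (V i)) (hVfin : ∀ i, μ (V i) ≠ ⊤)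
    (hV : ∀ i, HasRelaxedPerimeterLE μ (V i) P) (hAV : ∀ η > 0, ∃ i, μ.real (V i ∆ A) ≤ η) :
    HasRelaxedPerimeterLE μ A P := by
  intro η hη
  obtain ⟨i, hi⟩ := hAV (η / 2) (half_pos hη)
  obtain ⟨u, hu, huV, huP⟩ := hV i (η / 2) (half_pos hη)
  exact ⟨u, hu, by linarith [hu.indicatorDist_le_add hA hAfin (hVm i) (hVfin i)], huP⟩

end IndicatorDist

theorem measure_mul_measure_compl_le {α : Type*} [MeasurableSpace α] {ν : Measure α}
    {W : Set α} (hW : MeasurableSet W) {u : α → ℝ} (hu : Measurable u) :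
    ν W * ν Wᶜ ≤ ∫⁻ a, ∫⁻ b, ‖u b - u a‖ₑ ∂ν ∂ν +
      2 * ν univ * ∫⁻ a, ‖u a - W.indicator 1 a‖ₑ ∂ν := by
  set e : α → ℝ≥0∞ := fun a => ‖u a - W.indicator 1 a‖ₑ
  have he : Measurable e := (hu.sub (measurable_one.indicator hW)).enorm
  have hpoint (a b : α) :
      W.indicator 1 a * Wᶜ.indicator 1 b ≤ ‖u b - u a‖ₑ + e b + e a := by
    by_cases hab : a ∈ W ∧ b ∉ W
    · have heq : (1 : ℝ) = u a - u b + (u b - W.indicator 1 b) - (u a - W.indicator 1 a) := by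
        simp [hab.1, hab.2]
      calc W.indicator 1 a * Wᶜ.indicator 1 b = ‖(1 : ℝ)‖ₑ := by simp [hab.1, hab.2]
        _ ≤ ‖u a - u b‖ₑ + e b + e a := by
          rw [heq]
          exact enorm_sub_le.trans (by gcongr; exact enorm_add_le _ _)
        _ = _ := by rw [← enorm_neg, neg_sub]
    · have hzero : W.indicator 1 a * Wᶜ.indicator 1 b = (0 : ℝ≥0∞) := by
        by_cases ha : a ∈ W
        · simp [not_not.1 fun hb => hab ⟨ha, hb⟩]
        · simp [ha]
      exact hzero.le.trans zero_le
  calc ν W * ν Wᶜ = ∫⁻ a, ∫⁻ b, W.indicator 1 a * Wᶜ.indicator 1 b ∂ν ∂ν := by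
        simp_rw [lintegral_const_mul _ (measurable_one.indicator hW.compl)]
        rw [lintegral_mul_const _ (measurable_one.indicator hW), lintegral_indicator_one hW,
          lintegral_indicator_one hW.compl]
    _ ≤ ∫⁻ a, ∫⁻ b, ‖u b - u a‖ₑ + e b + e a ∂ν ∂ν :=
        lintegral_mono fun a => lintegral_mono fun b => hpoint a b
    _ = ∫⁻ a, (∫⁻ b, ‖u b - u a‖ₑ ∂ν + ∫⁻ b, e b ∂ν + e a * ν univ) ∂ν := by
        refine lintegral_congr fun a => ?_
        rw [lintegral_add_right _ measurable_const, lintegral_add_right _ he, lintegral_const]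
    _ = _ := by
        rw [lintegral_add_right _ (he.mul_const _), lintegral_add_right _ measurable_const,
          lintegral_const, lintegral_mul_const _ he]
        ring

section RelativeIsoperimetric

open Module (finrank)

variable [FiniteDimensional ℝ E] [BorelSpace E] [μ.IsAddHaarMeasure]

theorem IsCutoff.measureReal_inter_mul_measureReal_sdiff_le (hu : IsCutoff u)
    (hW : MeasurableSet W) (hfin : μ W ≠ ⊤) (x : E) {r : ℝ} (hr : 0 ≤ r) :
    μ.real (W ∩ closedBall x r) * μ.real (closedBall x r \ W) ≤
      μ.real (closedBall x r) * (2 * indicatorDist μ u W +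
        2 ^ (finrank ℝ E + 1) * r * ∫ y in closedBall x r, ‖fderiv ℝ u y‖ ∂μ) := by
  set B := closedBall x r
  have hBm : MeasurableSet B := measurableSet_closedBall
  have hB : μ B ≠ ⊤ := measure_closedBall_lt_top.ne
  set J := ∫ y in B, ‖fderiv ℝ u y‖ ∂μ
  have hJ : ∫⁻ y in B, ‖fderiv ℝ u y‖ₑ ∂μ = ENNReal.ofReal J :=
    (ofReal_integral_norm_eq_lintegral_enorm hu.integrable_fderiv.integrableOn).symm
  have hL : ∫⁻ y in B, ‖u y - W.indicator 1 y‖ₑ ∂μ ≤ ENNReal.ofReal (indicatorDist μ u W) :=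
    (setLIntegral_le_lintegral _ _).trans_eq
      (ofReal_integral_norm_eq_lintegral_enorm (hu.integrable_sub_indicator hW hfin)).symm
  have hL0 : 0 ≤ indicatorDist μ u W := indicatorDist_nonneg
  have hENN : μ (W ∩ B) * μ (B \ W) ≤ ENNReal.ofReal (μ.real B *
      (2 * indicatorDist μ u W + 2 ^ (finrank ℝ E + 1) * r * J)) := by
    calc μ (W ∩ B) * μ (B \ W) = μ.restrict B W * μ.restrict B Wᶜ := by
          rw [Measure.restrict_apply hW, Measure.restrict_apply hW.compl, inter_comm Wᶜ, sdiff_eq]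
      _ ≤ 2 ^ finrank ℝ E * ENNReal.ofReal (2 * r) * μ B * ENNReal.ofReal J +
          2 * μ B * ENNReal.ofReal (indicatorDist μ u W) := by
          refine (measure_mul_measure_compl_le hW hu.contDiff.continuous.measurable).trans ?_
          rw [Measure.restrict_apply_univ]
          gcongr
          refine (lintegral_enorm_sub_le_of_convex μ hu.contDiff (convex_closedBall x r)
            hBm).trans ?_
          rw [hJ]
          gcongr
          exact ediam_closedBall_le_ofReal_two_mul x r
      _ = _ := by
          rw [← ofReal_measureReal hB]
          simp only [← ENNReal.ofReal_ofNat 2, ← ENNReal.ofReal_pow zero_le_two]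
          rw [← ENNReal.ofReal_mul (by positivity), ← ENNReal.ofReal_mul (by positivity),
            ← ENNReal.ofReal_mul (by positivity), ← ENNReal.ofReal_mul (by positivity),
            ← ENNReal.ofReal_mul (by positivity), ← ENNReal.ofReal_add (by positivity)
            (by positivity)]
          congr 1
          ring
  have := ENNReal.toReal_mono ENNReal.ofReal_ne_top hENN
  rwa [ENNReal.toReal_mul, ENNReal.toReal_ofReal (by positivity)] at this

theorem IsCutoff.rpow_le_of_ballDensity_mem_Icc (hu : IsCutoff u) (hW : MeasurableSet W)
    (hfin : μ W ≠ ⊤) {x : E} {r κ : ℝ} (hr : 0 < r) (hκ : 0 ≤ κ)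
    (hdens : ballDensity μ W x r ∈ Icc κ (1 - κ)) :
    κ ^ 2 * μ.real (closedBall (0 : E) 1) * r ^ ((finrank ℝ E : ℝ) - 1) ≤
      indicatorDist μ u W * (2 / r) +
        2 ^ (finrank ℝ E + 1) * ∫ y in closedBall x r, ‖fderiv ℝ u y‖ ∂μ := by
  have hB := measureReal_closedBall_pos μ x hr
  have hiso := hu.measureReal_inter_mul_measureReal_sdiff_le hW hfin x hr.le
  rw [measureReal_inter_closedBall μ W x hr, measureReal_closedBall_sdiff μ hW x hr] at hiso
  set J := ∫ y in closedBall x r, ‖fderiv ℝ u y‖ ∂μ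
  have hprod : κ ^ 2 * μ.real (closedBall x r) ≤
      2 * indicatorDist μ u W + 2 ^ (finrank ℝ E + 1) * r * J := by
    refine le_of_mul_le_mul_left ?_ hB
    calc μ.real (closedBall x r) * (κ ^ 2 * μ.real (closedBall x r))
        = κ * μ.real (closedBall x r) * (κ * μ.real (closedBall x r)) := by ring
      _ ≤ _ := by
        have := hκ.trans hdens.1
        refine le_trans ?_ hiso
        gcongr
        exacts [hdens.1, by linarith [hdens.2]]
  rw [measureReal_closedBall_eq_rpow μ x hr] at hprod
  refine le_of_mul_le_mul_right ?_ hr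
  calc _ = κ ^ 2 * (μ.real (closedBall (0 : E) 1) * (r ^ ((finrank ℝ E : ℝ) - 1) * r)) := by ring
    _ ≤ _ := hprod
    _ = _ := by field_simp

theorem HasRelaxedPerimeterLE.sum_rpow_le (hP : HasRelaxedPerimeterLE μ W P) (hW : MeasurableSet W)
    (hfin : μ W ≠ ⊤) {κ : ℝ} (hκ : 0 < κ) {F : Finset E} {r : E → ℝ} (hr : ∀ x ∈ F, 0 < r x)
    (hdisj : (F : Set E).PairwiseDisjoint fun x => closedBall x (r x))
    (hdens : ∀ x ∈ F, ballDensity μ W x (r x) ∈ Icc κ (1 - κ)) :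
    ∑ x ∈ F, r x ^ ((finrank ℝ E : ℝ) - 1) ≤
      2 ^ (finrank ℝ E + 1) * P / (κ ^ 2 * μ.real (closedBall (0 : E) 1)) := by
  have hB : 0 < μ.real (closedBall (0 : E) 1) := measureReal_closedBall_pos μ 0 one_pos
  rw [le_div_iff₀' (by positivity)]
  refine le_of_forall_pos_le_mul_add (b := ∑ x ∈ F, 2 / r x) fun η hη => ?_
  obtain ⟨u, hu, huW, huP⟩ := hP η hη
  calc κ ^ 2 * μ.real (closedBall (0 : E) 1) * ∑ x ∈ F, r x ^ ((finrank ℝ E : ℝ) - 1)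
      ≤ ∑ x ∈ F, (η * (2 / r x) +
          2 ^ (finrank ℝ E + 1) * ∫ y in closedBall x (r x), ‖fderiv ℝ u y‖ ∂μ) := by
        rw [Finset.mul_sum]
        refine Finset.sum_le_sum fun x hx => ?_
        have hrx := hr x hx
        exact (hu.rpow_le_of_ballDensity_mem_Icc hW hfin hrx hκ.le (hdens x hx)).trans (by gcongr)
    _ ≤ η * ∑ x ∈ F, 2 / r x + 2 ^ (finrank ℝ E + 1) * P := by
        rw [Finset.sum_add_distrib, ← Finset.mul_sum, ← Finset.mul_sum]
        gcongr
        exact (sum_setIntegral_le_integral (fun _ _ => measurableSet_closedBall) hdisj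
          hu.integrable_fderiv.norm fun _ => norm_nonneg _).trans huP

end RelativeIsoperimetric

end RelaxedPerimeter

section Sobolev

open Module (finrank)

variable {E : Type*} [NormedAddCommGroup E] [NormedSpace ℝ E] [FiniteDimensional ℝ E]
  [MeasurableSpace E] [BorelSpace E] (μ : Measure E) [μ.IsAddHaarMeasure]

theorem exists_enorm_le_lintegral_fderiv_of_finrank_eq_one (hd : finrank ℝ E = 1) :
    ∃ C : ℝ≥0∞, C ≠ ⊤ ∧ ∀ f : E → ℝ, ContDiff ℝ 1 f → HasCompactSupport f → ∀ x,
      ‖f x‖ₑ ≤ C * ∫⁻ y, ‖fderiv ℝ f y‖ₑ ∂μ := by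
  let e : ℝ ≃L[ℝ] E := ContinuousLinearEquiv.ofFinrankEq (by rw [hd, Module.finrank_self])
  set ν : Measure E := volume.map e
  obtain ⟨c, hc⟩ : ∃ c : NNReal, ν = c • μ := ⟨_, Measure.isAddLeftInvariant_eq_smul ν μ⟩
  refine ⟨‖(e : ℝ →L[ℝ] E)‖ₑ * c, by finiteness, fun f hf hfc x => ?_⟩
  have hderiv (t : ℝ) : ‖deriv (f ∘ e) t‖ₑ ≤ ‖(e : ℝ →L[ℝ] E)‖ₑ * ‖fderiv ℝ f (e t)‖ₑ := by
    have hcomp : HasDerivAt (f ∘ e) (fderiv ℝ f (e t) (e 1)) t :=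
      (hf.differentiable one_ne_zero (e t)).hasFDerivAt.comp_hasDerivAt t
        (e : ℝ →L[ℝ] E).hasDerivAt
    have he : ‖e 1‖ₑ ≤ ‖(e : ℝ →L[ℝ] E)‖ₑ := by
      simpa using (e : ℝ →L[ℝ] E).le_opENorm 1
    rw [hcomp.deriv, mul_comm]
    exact (ContinuousLinearMap.le_opENorm _ _).trans (by gcongr)
  calc ‖f x‖ₑ = ‖(f ∘ e) (e.symm x)‖ₑ := by rw [Function.comp_apply, e.apply_symm_apply]
    _ ≤ ∫⁻ t in Iic (e.symm x), ‖deriv (f ∘ e) t‖ₑ :=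
        HasCompactSupport.enorm_le_lintegral_Ici_deriv (hf.comp e.contDiff)
          (hfc.comp_homeomorph e.toHomeomorph) _
    _ ≤ ∫⁻ t, ‖(e : ℝ →L[ℝ] E)‖ₑ * ‖fderiv ℝ f (e t)‖ₑ :=
        (setLIntegral_le_lintegral _ _).trans (lintegral_mono hderiv)
    _ = ‖(e : ℝ →L[ℝ] E)‖ₑ * ∫⁻ y, ‖fderiv ℝ f y‖ₑ ∂ν := by
        rw [lintegral_const_mul' _ _ enorm_ne_top, lintegral_map
          (hf.continuous_fderiv one_ne_zero).enorm.measurable e.continuous.measurable]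
    _ = _ := by
        rw [hc, lintegral_smul_measure, ENNReal.smul_def, smul_eq_mul, mul_assoc]

theorem exists_mul_rpow_measure_le_lintegral_fderiv (hd : 0 < finrank ℝ E) :
    ∃ C : ℝ≥0∞, C ≠ ⊤ ∧ ∀ f : E → ℝ, ContDiff ℝ 1 f → HasCompactSupport f →
      ∀ S : Set E, S.Nonempty → ∀ t : ℝ≥0∞, (∀ x ∈ S, t ≤ ‖f x‖ₑ) →
        t * μ S ^ (((finrank ℝ E : ℝ) - 1) / finrank ℝ E) ≤ C * ∫⁻ x, ‖fderiv ℝ f x‖ₑ ∂μ := by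
  rcases (Nat.succ_le_iff.2 hd).eq_or_lt' with hd1 | hd1
  · obtain ⟨C, hC, hbound⟩ := exists_enorm_le_lintegral_fderiv_of_finrank_eq_one μ hd1
    refine ⟨C, hC, fun f hf hfc S ⟨x, hx⟩ t ht => ?_⟩
    rw [hd1, Nat.cast_one, sub_self, zero_div, ENNReal.rpow_zero, mul_one]
    exact (ht x hx).trans (hbound f hf hfc x)
  have hp := NNReal.HolderConjugate.conjExponent (p := finrank ℝ E) (by exact_mod_cast hd1)
  set p := NNReal.conjExponent (finrank ℝ E)
  have hp0 : 0 < (p : ℝ) := hp.coe.symm.pos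
  have hp_inv : ((finrank ℝ E : ℝ) - 1) / finrank ℝ E = (p : ℝ)⁻¹ := by
    rw [← hp.coe.one_sub_inv, NNReal.coe_natCast, sub_div, div_self (by positivity), one_div]
  refine ⟨eLpNormLESNormFDerivOneConst μ p, ENNReal.coe_ne_top, fun f hf hfc S _ t ht => ?_⟩
  calc t * μ S ^ (((finrank ℝ E : ℝ) - 1) / finrank ℝ E)
      = (t ^ (p : ℝ) * μ S) ^ (p : ℝ)⁻¹ := by
        rw [hp_inv, ENNReal.mul_rpow_of_nonneg _ _ (by positivity), ENNReal.rpow_rpow_inv hp0.ne']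
    _ ≤ eLpNorm f p μ := by
        rw [ENNReal.rpow_inv_le_iff hp0]
        have hcheb := mul_meas_ge_le_pow_eLpNorm' μ (p := p) (by exact_mod_cast hp0.ne')
          ENNReal.coe_ne_top (hf.continuous.aestronglyMeasurable (μ := μ)) t
        rw [ENNReal.coe_toReal] at hcheb
        exact le_trans (by gcongr; exact ht) hcheb
    _ ≤ _ := by
        have hsob := eLpNorm_le_eLpNorm_fderiv_one μ hf hfc hp
        rwa [eLpNorm_one_eq_lintegral_enorm] at hsob

theorem exists_mul_rpow_measureReal_le_totalVariation (hd : 0 < finrank ℝ E) :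
    ∃ C : ℝ, 0 < C ∧ ∀ f : E → ℝ, ContDiff ℝ 1 f → HasCompactSupport f →
      ∀ S : Set E, S.Nonempty → ∀ t : ℝ, (∀ x ∈ S, t ≤ ‖f x‖) →
        t * μ.real S ^ (((finrank ℝ E : ℝ) - 1) / finrank ℝ E) ≤ C * totalVariation μ f := by
  obtain ⟨C, hC, hbound⟩ := exists_mul_rpow_measure_le_lintegral_fderiv μ hd
  refine ⟨C.toReal + 1, by positivity, fun f hf hfc S hS t ht => ?_⟩
  have hint : Integrable (fderiv ℝ f) μ :=
    (hf.continuous_fderiv one_ne_zero).integrable_of_hasCompactSupport (hfc.fderiv ℝ)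
  have hTV : 0 ≤ totalVariation μ f := totalVariation_nonneg
  have hENN := hbound f hf hfc S hS (ENNReal.ofReal t) fun x hx => by
    rw [← ofReal_norm]
    exact ENNReal.ofReal_le_ofReal (ht x hx)
  rw [← ofReal_integral_norm_eq_lintegral_enorm hint, ← totalVariation] at hENN
  have hreal := ENNReal.toReal_mono (by finiteness) hENN
  rw [ENNReal.toReal_mul, ENNReal.toReal_mul, ← ENNReal.toReal_rpow,
    ENNReal.toReal_ofReal hTV, ENNReal.toReal_ofReal'] at hreal
  calc t * μ.real S ^ (((finrank ℝ E : ℝ) - 1) / finrank ℝ E)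
      ≤ max t 0 * μ.real S ^ (((finrank ℝ E : ℝ) - 1) / finrank ℝ E) := by
        gcongr
        exact le_max_left _ _
    _ ≤ C.toReal * totalVariation μ f := hreal
    _ ≤ (C.toReal + 1) * totalVariation μ f := by gcongr; linarith

end Sobolev

section BallCutoff

variable {E : Type*} [NormedAddCommGroup E] [NormedSpace ℝ E]

/-- A cutoff function that localizes to the ball of centre `x` and radius `r`: it is `1` there,
vanishes off the concentric ball of radius `2 r`, and its gradient is at most `M / r`. -/
structure IsBallCutoff (M : ℝ) (x : E) (r : ℝ) (η : E → ℝ) : Prop extends IsCutoff η where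
  eq_one {y : E} : y ∈ closedBall x r → η y = 1
  tsupport_subset : tsupport η ⊆ closedBall x (2 * r)
  norm_fderiv_le (y : E) : ‖fderiv ℝ η y‖ ≤ M / r

theorem IsBallCutoff.eq_zero {M r : ℝ} {x y : E} {η : E → ℝ} (hη : IsBallCutoff M x r η)
    (hy : y ∉ closedBall x (2 * r)) : η y = 0 :=
  image_eq_zero_of_notMem_tsupport fun h => hy (hη.tsupport_subset h)

theorem IsBallCutoff.fderiv_eq_zero {M r : ℝ} {x y : E} {η : E → ℝ} (hη : IsBallCutoff M x r η)
    (hy : y ∉ closedBall x (2 * r)) : fderiv ℝ η y = 0 :=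
  fderiv_of_notMem_tsupport ℝ fun h => hy (hη.tsupport_subset h)

theorem exists_isBallCutoff [FiniteDimensional ℝ E] :
    ∃ M : ℝ, 0 < M ∧ ∀ (x : E) (r : ℝ), 0 < r → ∃ η, IsBallCutoff M x r η := by
  let b : ContDiffBump (0 : E) := ⟨1, 2, one_pos, one_lt_two⟩
  have hb : ContDiff ℝ 1 b := b.contDiff
  obtain ⟨M, hM⟩ := (hb.continuous_fderiv one_ne_zero).bounded_above_of_compact_support
    (b.hasCompactSupport.fderiv ℝ)
  refine ⟨max M 1, by positivity, fun x r hr => ⟨fun y => b (r⁻¹ • (y - x)), ?_⟩⟩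
  have hnorm (y : E) : ‖r⁻¹ • (y - x)‖ = r⁻¹ * dist y x := by
    rw [norm_smul, norm_inv, Real.norm_of_nonneg hr.le, dist_eq_norm]
  have hsupp : tsupport (fun y => b (r⁻¹ • (y - x))) ⊆ closedBall x (2 * r) := by
    refine closure_minimal (fun y hy => ?_) isClosed_closedBall
    have hlt := b.support_eq.subset hy
    rw [mem_ball_zero_iff, hnorm, inv_mul_lt_iff₀ hr, mul_comm] at hlt
    exact hlt.le
  have hfderiv (y : E) : fderiv ℝ (fun y => b (r⁻¹ • (y - x))) y =
      r⁻¹ • fderiv ℝ b (r⁻¹ • (y - x)) := by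
    rw [fderiv_comp_sub (f := fun z => b (r⁻¹ • z)), fderiv_comp_smul]
  exact
    { contDiff := hb.comp (by fun_prop)
      hasCompactSupport := (isCompact_closedBall x (2 * r)).of_isClosed_subset
        (isClosed_tsupport _) hsupp
      mem_Icc := fun _ => ⟨b.nonneg, b.le_one⟩
      eq_one := fun {y} hy => b.one_of_mem_closedBall <| by
        rw [mem_closedBall_zero_iff, hnorm, inv_mul_le_iff₀ hr, mul_one]
        exact hy
      tsupport_subset := hsupp
      norm_fderiv_le := fun y => by
        rw [hfderiv, norm_smul, norm_inv, Real.norm_of_nonneg hr.le, div_eq_inv_mul]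
        gcongr
        exact (hM _).trans (le_max_left _ _) }

variable [MeasurableSpace E] {μ : Measure E} {u η : E → ℝ} {W : Set E}

variable [OpensMeasurableSpace E] [IsFiniteMeasureOnCompacts μ]

theorem IsCutoff.integrable_mul_norm_fderiv (hu : IsCutoff u) (hη : Continuous η) :
    Integrable (fun y => η y * ‖fderiv ℝ u y‖) μ :=
  (hη.mul hu.continuous_fderiv.norm).integrable_of_hasCompactSupport
    (hu.hasCompactSupport.fderiv ℝ).norm.mul_left

theorem IsCutoff.integrable_self_mul_norm_fderiv (hu : IsCutoff u) (hη : ContDiff ℝ 1 η) :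
    Integrable (fun y => u y * ‖fderiv ℝ η y‖) μ :=
  (hu.contDiff.continuous.mul (hη.continuous_fderiv one_ne_zero).norm
    ).integrable_of_hasCompactSupport hu.hasCompactSupport.mul_right

theorem IsCutoff.totalVariation_mul_le (hu : IsCutoff u) (hη : ContDiff ℝ 1 η) (hη0 : 0 ≤ η) :
    totalVariation μ (fun y => η y * u y) ≤
      (∫ y, η y * ‖fderiv ℝ u y‖ ∂μ) + ∫ y, u y * ‖fderiv ℝ η y‖ ∂μ := by
  have hint₁ := hu.integrable_mul_norm_fderiv (μ := μ) hη.continuous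
  have hint₂ := hu.integrable_self_mul_norm_fderiv (μ := μ) hη
  rw [← integral_add hint₁ hint₂]
  refine integral_mono_of_nonneg (ae_of_all _ fun _ => norm_nonneg _) (hint₁.add hint₂)
    (ae_of_all _ fun y => ?_)
  beta_reduce
  rw [fderiv_fun_mul (hη.differentiable one_ne_zero y)
    (hu.contDiff.differentiable one_ne_zero y)]
  refine (norm_add_le _ _).trans_eq ?_
  rw [norm_smul, norm_smul, Real.norm_of_nonneg (hη0 y), Real.norm_of_nonneg (hu.mem_Icc y).1]

theorem IsCutoff.setIntegral_le (hu : IsCutoff u) (hW : MeasurableSet W) (hfin : μ W ≠ ⊤)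
    (B : Set E) : ∫ y in B, u y ∂μ ≤ μ.real (W ∩ B) + indicatorDist μ u W := by
  have hdiff := hu.integrable_sub_indicator hW hfin
  have hind := integrable_indicator_one hW hfin
  calc ∫ y in B, u y ∂μ
      = (∫ y in B, W.indicator 1 y ∂μ) + ∫ y in B, (u y - W.indicator 1 y) ∂μ := by
        rw [← integral_add hind.integrableOn hdiff.integrableOn]
        simp only [add_sub_cancel]
    _ ≤ _ := by
        rw [integral_indicator_one hW, measureReal_restrict_apply hW]
        gcongr
        exact (integral_mono hdiff.integrableOn hdiff.norm.integrableOn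
          fun y => le_abs_self _).trans
          (setIntegral_le_integral hdiff.norm (ae_of_all _ fun _ => norm_nonneg _))

theorem IsCutoff.measureReal_inter_le (hu : IsCutoff u) (hW : MeasurableSet W) (hfin : μ W ≠ ⊤)
    {B : Set E} (hB : MeasurableSet B) :
    μ.real (W ∩ B) ≤ μ.real (W ∩ B ∩ {y | 1 / 2 ≤ u y}) + 2 * indicatorDist μ u W := by
  have hdiff := (hu.integrable_sub_indicator hW hfin).norm
  have hsuper : MeasurableSet {y | 1 / 2 ≤ u y} :=
    measurableSet_le measurable_const hu.contDiff.continuous.measurable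
  have hWB : μ (W ∩ B) ≠ ⊤ := measure_ne_top_of_subset inter_subset_left hfin
  have hmass : 1 / 2 * μ.real ((W ∩ B) \ {y | 1 / 2 ≤ u y}) ≤ indicatorDist μ u W := by
    calc 1 / 2 * μ.real ((W ∩ B) \ {y | 1 / 2 ≤ u y})
        = ∫ y in (W ∩ B) \ {y | 1 / 2 ≤ u y}, (1 / 2 : ℝ) ∂μ := by
          rw [setIntegral_const, smul_eq_mul, mul_comm]
      _ ≤ ∫ y in (W ∩ B) \ {y | 1 / 2 ≤ u y}, ‖u y - W.indicator 1 y‖ ∂μ := by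
          refine setIntegral_mono_on (integrableOn_const
            (measure_ne_top_of_subset sdiff_subset hWB)) hdiff.integrableOn
            ((hW.inter hB).diff hsuper) ?_
          rintro y ⟨⟨hyW, _⟩, hy⟩
          rw [indicator_of_mem hyW, Pi.one_apply, norm_sub_rev]
          refine le_trans ?_ (le_abs_self _)
          rw [mem_ofPred_eq, not_le] at hy
          linarith
      _ ≤ _ := setIntegral_le_integral hdiff (ae_of_all _ fun _ => norm_nonneg _)
  linarith [measureReal_inter_add_sdiff₀ hsuper.nullMeasurableSet hWB]

theorem IsBallCutoff.integral_mul_norm_fderiv_le {M r : ℝ} {x : E} (hη : IsBallCutoff M x r η)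
    (hM : 0 ≤ M) (hr : 0 ≤ r) (hu : IsCutoff u) (hW : MeasurableSet W) (hfin : μ W ≠ ⊤) :
    ∫ y, u y * ‖fderiv ℝ η y‖ ∂μ ≤
      (μ.real (W ∩ closedBall x (2 * r)) + indicatorDist μ u W) * (M / r) := by
  calc ∫ y, u y * ‖fderiv ℝ η y‖ ∂μ
      = ∫ y in closedBall x (2 * r), u y * ‖fderiv ℝ η y‖ ∂μ := by
        refine (setIntegral_eq_integral_of_forall_compl_eq_zero fun y hy => ?_).symm
        rw [hη.fderiv_eq_zero hy, norm_zero, mul_zero]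
    _ ≤ ∫ y in closedBall x (2 * r), u y * (M / r) ∂μ :=
        integral_mono (hu.integrable_self_mul_norm_fderiv hη.contDiff).integrableOn
          (hu.integrable.mul_const _).integrableOn fun y =>
          mul_le_mul_of_nonneg_left (hη.norm_fderiv_le y) (hu.mem_Icc y).1
    _ ≤ _ := by
        rw [integral_mul_const]
        gcongr
        exact hu.setIntegral_le hW hfin _

end BallCutoff

section Excision

open Module (finrank)

variable {E : Type*} [NormedAddCommGroup E] [NormedSpace ℝ E] [FiniteDimensional ℝ E]
  [MeasurableSpace E] [BorelSpace E] (μ : Measure E) [μ.IsAddHaarMeasure]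

theorem IsBallCutoff.integral_mul_norm_fderiv_le_rpow {M r τ : ℝ} {x : E} {η u : E → ℝ} {W : Set E}
    (hη : IsBallCutoff M x r η) (hM : 0 ≤ M) (hr : 0 < r) (hu : IsCutoff u)
    (hW : MeasurableSet W) (hfin : μ W ≠ ⊤)
    (hdist : indicatorDist μ u W ≤ τ * μ.real (closedBall x (2 * r)))
    (hdens : ballDensity μ W x (2 * r) ≤ τ) :
    ∫ y, u y * ‖fderiv ℝ η y‖ ∂μ ≤
      2 ^ (finrank ℝ E + 1) * M * μ.real (closedBall (0 : E) 1) * τ *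
        r ^ ((finrank ℝ E : ℝ) - 1) := by
  calc ∫ y, u y * ‖fderiv ℝ η y‖ ∂μ
      ≤ (μ.real (W ∩ closedBall x (2 * r)) + indicatorDist μ u W) * (M / r) :=
        hη.integral_mul_norm_fderiv_le hM hr.le hu hW hfin
    _ ≤ (τ * μ.real (closedBall x (2 * r)) + τ * μ.real (closedBall x (2 * r))) * (M / r) := by
        rw [measureReal_inter_closedBall μ W x (by positivity)]
        gcongr
    _ = _ := by
        rw [measureReal_closedBall_two_mul μ x hr.le, measureReal_closedBall_eq_rpow μ x hr]
        field_simp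
        ring

theorem exists_mul_rpow_le_totalVariation_mul (hd : 0 < finrank ℝ E) :
    ∃ c : ℝ, 0 < c ∧ ∀ {M r τ : ℝ} {x : E} {η u : E → ℝ} {W : Set E},
      IsBallCutoff M x r η → 0 < r → 0 < τ → IsCutoff u → MeasurableSet W → μ W ≠ ⊤ →
      2 * indicatorDist μ u W ≤ τ / 4 * μ.real (closedBall x r) → τ / 2 ≤ ballDensity μ W x r →
      c * τ ^ (((finrank ℝ E : ℝ) - 1) / finrank ℝ E) * r ^ ((finrank ℝ E : ℝ) - 1) ≤
        totalVariation μ fun y => η y * u y := by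
  obtain ⟨C, hC, hiso⟩ := exists_mul_rpow_measureReal_le_totalVariation μ hd
  set d : ℝ := (finrank ℝ E : ℝ)
  set v := μ.real (closedBall (0 : E) 1)
  have hv : 0 < v := measureReal_closedBall_pos μ 0 one_pos
  have hd1 : 1 ≤ d := Nat.one_le_cast.2 hd
  have hp : 0 ≤ (d - 1) / d := div_nonneg (by linarith) (by linarith)
  refine ⟨(v / 4) ^ ((d - 1) / d) / (2 * C), by positivity, ?_⟩
  intro M r τ x η u W hη hr hτ hu hW hfin hdist hdens
  set S := W ∩ closedBall x r ∩ {y | 1 / 2 ≤ u y}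
  have hball : μ.real (closedBall x r) = v * r ^ d := by
    rw [measureReal_closedBall_eq_rpow μ x hr, ← Real.rpow_add_one hr.ne', sub_add_cancel]
  have hmass : τ * (v / 4) * r ^ d ≤ μ.real S := by
    have hhalf := hu.measureReal_inter_le hW hfin (measurableSet_closedBall (x := x) (ε := r))
    rw [measureReal_inter_closedBall μ W x hr, hball] at hhalf
    rw [hball] at hdist
    have := mul_le_mul_of_nonneg_right hdens (by positivity : 0 ≤ v * r ^ d)
    linarith
  have hS : S.Nonempty := nonempty_of_measureReal_ne_zero (lt_of_lt_of_le (by positivity) hmass).ne'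
  have hsob := hiso (fun y => η y * u y) (hη.contDiff.mul hu.contDiff)
    hη.hasCompactSupport.mul_right S hS (1 / 2) fun y hy => by
      rw [hη.eq_one hy.1.2, one_mul]
      exact hy.2.trans (le_abs_self _)
  rw [div_mul_eq_mul_div, div_mul_eq_mul_div, div_le_iff₀ (by positivity)]
  calc (v / 4) ^ ((d - 1) / d) * τ ^ ((d - 1) / d) * r ^ (d - 1)
      = (τ * (v / 4) * r ^ d) ^ ((d - 1) / d) := by
        rw [Real.mul_rpow (by positivity) (by positivity), Real.mul_rpow hτ.le (by positivity),
          ← Real.rpow_mul hr.le, mul_div_cancel₀ _ (by positivity)]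
        ring
    _ ≤ μ.real S ^ ((d - 1) / d) := Real.rpow_le_rpow (by positivity) hmass hp
    _ ≤ _ := by linarith

/-- Every ball in which a set has density about `τ` admits a cutoff function `η` whose excision,
the replacement of an approximation `u` of the set by `(1 - η) * u`, decreases the total variation
by at least `c * r ^ (d - 1)`. -/
def HasExcisionGain (τ c : ℝ) : Prop :=
  ∀ (x : E) (r : ℝ), 0 < r → ∃ M η, IsBallCutoff M x r η ∧
    ∀ u W, IsCutoff u → MeasurableSet W → μ W ≠ ⊤ →
      2 * indicatorDist μ u W ≤ τ / 4 * μ.real (closedBall x r) → τ / 2 ≤ ballDensity μ W x r →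
      ballDensity μ W x (2 * r) ≤ τ →
      c * r ^ ((finrank ℝ E : ℝ) - 1) ≤
        (∫ y, η y * ‖fderiv ℝ u y‖ ∂μ) - ∫ y, u y * ‖fderiv ℝ η y‖ ∂μ

theorem eventually_exists_hasExcisionGain (hd : 0 < finrank ℝ E) :
    ∀ᶠ τ in 𝓝[>] (0 : ℝ), ∃ c > 0, HasExcisionGain (E := E) μ τ c := by
  obtain ⟨M, hM, hcut⟩ := exists_isBallCutoff (E := E)
  obtain ⟨a, ha, hlower⟩ := exists_mul_rpow_le_totalVariation_mul μ hd
  set d : ℝ := (finrank ℝ E : ℝ)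
  set b := 2 ^ (finrank ℝ E + 1) * M * μ.real (closedBall (0 : E) 1)
  have hd1 : 0 < d := Nat.cast_pos.2 hd
  have hp : (d - 1) / d < 1 := (div_lt_one hd1).2 (sub_one_lt d)
  filter_upwards [eventually_mul_lt_mul_rpow ha hp (2 * b), self_mem_nhdsWithin] with τ hlt hτ
  replace hτ : 0 < τ := hτ
  refine ⟨a * τ ^ ((d - 1) / d) - 2 * b * τ, sub_pos.2 hlt, fun x r hr => ?_⟩
  obtain ⟨η, hη⟩ := hcut x r hr
  refine ⟨M, η, hη, fun u W hu hW hfin hdist hdens hdens₂ => ?_⟩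
  have hdist₂ : indicatorDist μ u W ≤ τ * μ.real (closedBall x (2 * r)) := by
    have : μ.real (closedBall x r) ≤ μ.real (closedBall x (2 * r)) :=
      measureReal_mono (closedBall_subset_closedBall (by linarith)) measure_closedBall_lt_top.ne
    have : τ * μ.real (closedBall x r) ≤ τ * μ.real (closedBall x (2 * r)) := by gcongr
    have : 0 ≤ indicatorDist μ u W := indicatorDist_nonneg
    linarith
  have hupper := hη.integral_mul_norm_fderiv_le_rpow μ hM.le hr hu hW hfin hdist₂ hdens₂
  have hprod := hu.totalVariation_mul_le (μ := μ) hη.contDiff fun y => (hη.mem_Icc y).1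
  linarith [hlower hη hr hτ hu hW hfin hdist hdens]

end Excision

section ExcisionOfFamily

variable {E : Type*} [NormedAddCommGroup E] [NormedSpace ℝ E] {ι : Type*} {F : Finset ι}
  {η : ι → E → ℝ} {u : E → ℝ}

theorem sum_le_one_of_pairwiseDisjoint_support {α : Type*} {η : ι → α → ℝ}
    (hη : ∀ i ∈ F, ∀ y, η i y ≤ 1)
    (hdisj : (F : Set ι).PairwiseDisjoint fun i => Function.support (η i)) (y : α) :
    ∑ i ∈ F, η i y ≤ 1 := by
  by_cases h : ∃ i ∈ F, η i y ≠ 0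
  · obtain ⟨i, hi, hiy⟩ := h
    rw [Finset.sum_eq_single_of_mem i hi]
    · exact hη i hi y
    · exact fun j hj hji => by_contra fun hjy => (hdisj hj hi hji).le_bot ⟨hjy, hiy⟩
  · push Not at h
    rw [Finset.sum_eq_zero h]
    exact zero_le_one

theorem IsCutoff.one_sub_sum_mul (hu : IsCutoff u) (hη : ∀ i ∈ F, IsCutoff (η i))
    (hsum : ∀ y, ∑ i ∈ F, η i y ≤ 1) : IsCutoff fun y => (1 - ∑ i ∈ F, η i y) * u y where
  contDiff := (contDiff_const.sub (ContDiff.sum fun i hi => (hη i hi).contDiff)).mul hu.contDiff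
  hasCompactSupport := hu.hasCompactSupport.mul_left
  mem_Icc y := by
    have h0 : 0 ≤ ∑ i ∈ F, η i y := Finset.sum_nonneg fun i hi => ((hη i hi).mem_Icc y).1
    exact ⟨mul_nonneg (sub_nonneg.2 (hsum y)) (hu.mem_Icc y).1,
      mul_le_one₀ (by linarith) (hu.mem_Icc y).1 (hu.mem_Icc y).2⟩

variable [MeasurableSpace E] {μ : Measure E} {W : Set E}

theorem HasRelaxedPerimeterLE.exists_almost_minimizer {P : ℝ} (hP : HasRelaxedPerimeterLE μ W P)
    {ε : ℝ} (hε : 0 < ε) :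
    ∃ δ > 0, ∀ η > 0, ∃ u, IsCutoff u ∧ indicatorDist μ u W ≤ η ∧
      ∀ u', IsCutoff u' → indicatorDist μ u' W ≤ δ →
        totalVariation μ u ≤ totalVariation μ u' + ε := by
  set S := {Q | HasRelaxedPerimeterLE μ W Q}
  have hbdd : BddBelow S := ⟨0, fun Q hQ => hQ.nonneg⟩
  obtain ⟨P₁, hP₁, hlt⟩ := exists_lt_of_csInf_lt (⟨P, hP⟩ : S.Nonempty)
    (lt_add_of_pos_right (sInf S) (half_pos hε))
  have hnot : ¬HasRelaxedPerimeterLE μ W (sInf S - ε / 2) := fun h => by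
    linarith [csInf_le hbdd h]
  simp only [HasRelaxedPerimeterLE, not_forall, not_exists, not_and, not_le] at hnot
  obtain ⟨δ, hδ, hlower⟩ := hnot
  refine ⟨δ, hδ, fun η hη => ?_⟩
  obtain ⟨u, hu, huW, huP⟩ := hP₁ η hη
  exact ⟨u, hu, huW, fun u' hu' hu'W => by linarith [hlower u' hu' hu'W]⟩

variable [OpensMeasurableSpace E] [IsFiniteMeasureOnCompacts μ]

theorem IsCutoff.indicatorDist_one_sub_sum_mul_le (hu : IsCutoff u) (hη : ∀ i ∈ F, IsCutoff (η i))
    (hW : MeasurableSet W) (hfin : μ W ≠ ⊤) :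
    indicatorDist μ (fun y => (1 - ∑ i ∈ F, η i y) * u y) W ≤
      indicatorDist μ u W + ∑ i ∈ F, ∫ y, η i y ∂μ := by
  have hint (i : ι) (hi : i ∈ F) : Integrable (η i) μ := (hη i hi).integrable
  have hdiff := (hu.integrable_sub_indicator hW hfin).norm
  rw [← integral_finsetSum _ hint, indicatorDist, indicatorDist,
    ← integral_add hdiff (integrable_finsetSum _ hint)]
  refine integral_mono_of_nonneg (ae_of_all _ fun _ => norm_nonneg _)
    (hdiff.add (integrable_finsetSum _ hint)) (ae_of_all _ fun y => ?_)
  have h0 : 0 ≤ ∑ i ∈ F, η i y := Finset.sum_nonneg fun i hi => ((hη i hi).mem_Icc y).1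
  calc ‖(1 - ∑ i ∈ F, η i y) * u y - W.indicator 1 y‖
      = ‖(u y - W.indicator 1 y) - (∑ i ∈ F, η i y) * u y‖ := by ring_nf
    _ ≤ ‖u y - W.indicator 1 y‖ + ‖∑ i ∈ F, η i y‖ * ‖u y‖ := by
        rw [← norm_mul]
        exact norm_sub_le _ _
    _ ≤ ‖u y - W.indicator 1 y‖ + ∑ i ∈ F, η i y := by
        rw [Real.norm_of_nonneg h0]
        gcongr
        exact mul_le_of_le_one_right h0 (hu.norm_le_one y)

theorem IsCutoff.totalVariation_one_sub_sum_mul_le (hu : IsCutoff u)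
    (hη : ∀ i ∈ F, IsCutoff (η i)) (hsum : ∀ y, ∑ i ∈ F, η i y ≤ 1) :
    totalVariation μ (fun y => (1 - ∑ i ∈ F, η i y) * u y) ≤ totalVariation μ u -
      ∑ i ∈ F, ((∫ y, η i y * ‖fderiv ℝ u y‖ ∂μ) - ∫ y, u y * ‖fderiv ℝ (η i) y‖ ∂μ) := by
  set ζ : E → ℝ := fun y => 1 - ∑ i ∈ F, η i y
  have hηd (i : ι) (hi : i ∈ F) : ContDiff ℝ 1 (η i) := (hη i hi).contDiff
  have hζ : ContDiff ℝ 1 ζ := contDiff_const.sub (ContDiff.sum hηd)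
  have hkept : ∫ y, ζ y * ‖fderiv ℝ u y‖ ∂μ =
      totalVariation μ u - ∑ i ∈ F, ∫ y, η i y * ‖fderiv ℝ u y‖ ∂μ := by
    have hint (i : ι) (hi : i ∈ F) : Integrable (fun y => η i y * ‖fderiv ℝ u y‖) μ :=
      hu.integrable_mul_norm_fderiv (hηd i hi).continuous
    rw [← integral_finsetSum _ hint, totalVariation,
      ← integral_sub hu.integrable_fderiv.norm (integrable_finsetSum _ hint)]
    simp only [ζ, sub_mul, one_mul, Finset.sum_mul]
  have hcreated : ∫ y, u y * ‖fderiv ℝ ζ y‖ ∂μ ≤ ∑ i ∈ F, ∫ y, u y * ‖fderiv ℝ (η i) y‖ ∂μ := by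
    have hint (i : ι) (hi : i ∈ F) : Integrable (fun y => u y * ‖fderiv ℝ (η i) y‖) μ :=
      hu.integrable_self_mul_norm_fderiv (hηd i hi)
    rw [← integral_finsetSum _ hint]
    refine integral_mono (hu.integrable_self_mul_norm_fderiv hζ) (integrable_finsetSum _ hint)
      fun y => ?_
    beta_reduce
    rw [← Finset.mul_sum, fderiv_const_sub, norm_neg,
      fderiv_fun_sum fun i hi => (hηd i hi).differentiable one_ne_zero y]
    exact mul_le_mul_of_nonneg_left (norm_sum_le _ _) (hu.mem_Icc y).1
  have hprod := hu.totalVariation_mul_le (μ := μ) hζ fun y => sub_nonneg.2 (hsum y)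
  rw [Finset.sum_sub_distrib]
  linarith

theorem IsBallCutoff.integral_le {M r : ℝ} {x : E} {η : E → ℝ} (hη : IsBallCutoff M x r η)
    (hfin : μ (closedBall x (2 * r)) ≠ ⊤) : ∫ y, η y ∂μ ≤ μ.real (closedBall x (2 * r)) := by
  rw [← setIntegral_eq_integral_of_forall_compl_eq_zero fun _ => hη.eq_zero]
  calc ∫ y in closedBall x (2 * r), η y ∂μ ≤ ∫ _ in closedBall x (2 * r), (1 : ℝ) ∂μ :=
        integral_mono hη.integrable.integrableOn (integrableOn_const hfin) fun y => (hη.mem_Icc y).2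
    _ = _ := by rw [setIntegral_const, smul_eq_mul, mul_one]

end ExcisionOfFamily

section LowDensity

open Module (finrank)

variable {E : Type*} [NormedAddCommGroup E] [NormedSpace ℝ E] [FiniteDimensional ℝ E]
  [MeasurableSpace E] [BorelSpace E] (μ : Measure E) [μ.IsAddHaarMeasure] {W : Set E} {P τ c : ℝ}

theorem ballDensity_le_two_pow_mul_ballDensity_two_mul (W : Set E) (x : E) {r : ℝ} (hr : 0 < r) :
    ballDensity μ W x r ≤ 2 ^ finrank ℝ E * ballDensity μ W x (2 * r) := by
  have hball := measureReal_closedBall_pos μ x hr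
  rw [ballDensity, ballDensity, measureReal_closedBall_two_mul μ x hr.le, mul_div_assoc',
    mul_div_mul_left _ _ (by positivity)]
  gcongr
  · exact measure_ne_top_of_subset inter_subset_right measure_closedBall_lt_top.ne
  · linarith

variable {μ}

theorem HasRelaxedPerimeterLE.exists_sum_rpow_le_of_hasExcisionGain
    (hP : HasRelaxedPerimeterLE μ W P) (hW : MeasurableSet W) (hfin : μ W ≠ ⊤) (hτ : 0 < τ)
    (hc : 0 < c) (hgain : HasExcisionGain (E := E) μ τ c) {ε : ℝ} (hε : 0 < ε) :
    ∃ δ > 0, ∀ (F : Finset E) (r : E → ℝ), (∀ x ∈ F, 0 < r x) →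
      (F : Set E).PairwiseDisjoint (fun x => closedBall x (2 * r x)) →
      ∑ x ∈ F, μ.real (closedBall x (2 * r x)) ≤ δ → (∀ x ∈ F, τ / 2 ≤ ballDensity μ W x (r x)) →
      (∀ x ∈ F, ballDensity μ W x (2 * r x) ≤ τ) →
      ∑ x ∈ F, r x ^ ((finrank ℝ E : ℝ) - 1) ≤ ε := by
  obtain ⟨δ, hδ, hmin⟩ := hP.exists_almost_minimizer (mul_pos hc hε)
  refine ⟨δ / 2, half_pos hδ, fun F r hr hdisj hvol hlow hhigh => ?_⟩
  have hsmall (x : E) (hx : x ∈ F) :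
      ∀ᶠ η in 𝓝[>] (0 : ℝ), 2 * η ≤ τ / 4 * μ.real (closedBall x (r x)) := by
    have hball := measureReal_closedBall_pos μ x (hr x hx)
    filter_upwards [Ioc_mem_nhdsGT (show 0 < τ / 8 * μ.real (closedBall x (r x)) by positivity)]
      with η hη
    linarith [hη.2]
  obtain ⟨η₀, hη₀F, hη₀, hη₀δ⟩ :=
    (((Finset.eventually_all F).2 hsmall).and (Ioc_mem_nhdsGT (half_pos hδ))).exists
  obtain ⟨u, hu, huW, humin⟩ := hmin η₀ hη₀
  choose! M η hη hηgain using fun x hx => hgain x (r x) (hr x hx)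
  have hcut (x : E) (hx : x ∈ F) : IsCutoff (η x) := (hη x hx).toIsCutoff
  have hsum := sum_le_one_of_pairwiseDisjoint_support (fun x hx y => ((hcut x hx).mem_Icc y).2)
    fun x hx y hy hxy => (hdisj hx hy hxy).mono
      ((subset_tsupport _).trans (hη x hx).tsupport_subset)
      ((subset_tsupport _).trans (hη y hy).tsupport_subset)
  have hdist : indicatorDist μ (fun y => (1 - ∑ x ∈ F, η x y) * u y) W ≤ δ := by
    have hmass : ∑ x ∈ F, ∫ y, η x y ∂μ ≤ ∑ x ∈ F, μ.real (closedBall x (2 * r x)) :=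
      Finset.sum_le_sum fun x hx => (hη x hx).integral_le measure_closedBall_lt_top.ne
    linarith [hu.indicatorDist_one_sub_sum_mul_le hcut hW hfin]
  refine le_of_mul_le_mul_left ?_ hc
  calc c * ∑ x ∈ F, r x ^ ((finrank ℝ E : ℝ) - 1)
      ≤ ∑ x ∈ F, ((∫ y, η x y * ‖fderiv ℝ u y‖ ∂μ) - ∫ y, u y * ‖fderiv ℝ (η x) y‖ ∂μ) := by
        rw [Finset.mul_sum]
        refine Finset.sum_le_sum fun x hx => hηgain x hx u W hu hW hfin ?_ (hlow x hx) (hhigh x hx)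
        exact le_trans (by gcongr) (hη₀F x hx)
    _ ≤ c * ε := by
        linarith [humin _ (hu.one_sub_sum_mul hcut hsum) hdist,
          hu.totalVariation_one_sub_sum_mul_le (μ := μ) hcut hsum]

theorem exists_sum_rpow_two_mul_le (hP : HasRelaxedPerimeterLE μ W P) (hW : MeasurableSet W)
    (hfin : μ W ≠ ⊤) (hτ : 0 < τ) (hτ₂ : τ ≤ 1 / 2) :
    ∃ C : ℝ, ∀ (F : Finset E) (r : E → ℝ), (∀ x ∈ F, 0 < r x) →
      (F : Set E).PairwiseDisjoint (fun x => closedBall x (2 * r x)) →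
      (∀ x ∈ F, τ / 2 ≤ ballDensity μ W x (r x)) →
      (∀ x ∈ F, ballDensity μ W x (2 * r x) ≤ τ) →
      ∑ x ∈ F, (2 * r x) ^ ((finrank ℝ E : ℝ) - 1) ≤ C := by
  set κ := τ / 2 / 2 ^ finrank ℝ E
  have hκ : κ ≤ 1 / 2 := (div_le_self (by positivity) (one_le_pow₀ one_le_two)).trans (by linarith)
  refine ⟨_, fun F r hr hdisj hlow hhigh => hP.sum_rpow_le hW hfin (κ := κ) (by positivity)
    (fun x hx => mul_pos two_pos (hr x hx)) hdisj fun x hx => ⟨?_, ?_⟩⟩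
  · rw [div_le_iff₀' (by positivity)]
    exact (hlow x hx).trans (ballDensity_le_two_pow_mul_ballDensity_two_mul μ W x (hr x hx))
  · linarith [hhigh x hx]

theorem eventually_sum_rpow_le_of_hasExcisionGain (hP : HasRelaxedPerimeterLE μ W P)
    (hW : MeasurableSet W) (hfin : μ W ≠ ⊤) (hτ : 0 < τ) (hτ₂ : τ ≤ 1 / 2) (hc : 0 < c)
    (hgain : HasExcisionGain (E := E) μ τ c) {ε : ℝ} (hε : 0 < ε) :
    ∀ᶠ δ in 𝓝[>] (0 : ℝ), ∀ (F : Finset E) (r : E → ℝ), (∀ x ∈ F, 0 < r x) →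
      (∀ x ∈ F, 2 * r x ≤ δ) → (F : Set E).PairwiseDisjoint (fun x => closedBall x (2 * r x)) →
      (∀ x ∈ F, τ / 2 ≤ ballDensity μ W x (r x)) →
      (∀ x ∈ F, ballDensity μ W x (2 * r x) ≤ τ) →
      ∑ x ∈ F, r x ^ ((finrank ℝ E : ℝ) - 1) ≤ ε := by
  obtain ⟨C, hC⟩ := exists_sum_rpow_two_mul_le hP hW hfin hτ hτ₂
  obtain ⟨δ₀, hδ₀, hsum⟩ := hP.exists_sum_rpow_le_of_hasExcisionGain hW hfin hτ hc hgain hε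
  set v := μ.real (closedBall (0 : E) 1)
  have hlim : Tendsto (fun δ => v * δ * C) (𝓝[>] 0) (𝓝 0) := by
    have hcont : Continuous fun δ => v * δ * C := by fun_prop
    simpa using (hcont.tendsto 0).mono_left nhdsWithin_le_nhds
  filter_upwards [hlim.eventually_le_const hδ₀, self_mem_nhdsWithin] with δ hδ hδ0
  replace hδ0 : 0 < δ := hδ0
  refine fun F r hr hrδ hdisj hlow hhigh => hsum F r hr hdisj (le_trans ?_ hδ) hlow hhigh
  calc ∑ x ∈ F, μ.real (closedBall x (2 * r x))
      ≤ ∑ x ∈ F, v * δ * (2 * r x) ^ ((finrank ℝ E : ℝ) - 1) := by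
        refine Finset.sum_le_sum fun x hx => ?_
        have := hr x hx
        rw [measureReal_closedBall_eq_rpow μ x (by positivity), mul_assoc, mul_comm δ]
        gcongr
        exact hrδ x hx
    _ ≤ v * δ * C := by
        rw [← Finset.mul_sum]
        gcongr
        exact hC F r hr hdisj hlow hhigh

theorem tendsto_two_mul_nhdsGT_zero : Tendsto (fun r : ℝ => 2 * r) (𝓝[>] 0) (𝓝[>] 0) :=
  tendsto_nhdsWithin_iff.2 ⟨by
    have hcont : Continuous fun r : ℝ => 2 * r := by fun_prop
    simpa using (hcont.tendsto 0).mono_left nhdsWithin_le_nhds,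
    eventually_mem_nhdsWithin.mono fun _ hr => mem_Ioi.2 (mul_pos two_pos hr)⟩

theorem hausdorffMeasure_setOf_ballDensity_le_and_frequently_lt_eq_zero (hd : 0 < finrank ℝ E)
    (hP : HasRelaxedPerimeterLE μ W P) (hW : MeasurableSet W) (hfin : μ W ≠ ⊤) (hτ : 0 < τ)
    (hτ₂ : τ ≤ 1 / 2) (hc : 0 < c) (hgain : HasExcisionGain (E := E) μ τ c) :
    μH[(finrank ℝ E : ℝ) - 1] {x | (∀ᶠ r in 𝓝[>] 0, ballDensity μ W x r ≤ τ) ∧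
      ∃ᶠ r in 𝓝[>] 0, τ / 2 < ballDensity μ W x r} = 0 := by
  set S := {x | (∀ᶠ r in 𝓝[>] 0, ballDensity μ W x r ≤ τ) ∧
    ∃ᶠ r in 𝓝[>] 0, τ / 2 < ballDensity μ W x r}
  set p := (finrank ℝ E : ℝ) - 1
  have hp : 0 ≤ p := sub_nonneg.2 (Nat.one_le_cast.2 hd)
  have hbound (ε : ℝ) (hε : 0 < ε) : μH[p] S ≤ ENNReal.ofReal (8 ^ p * (2 ^ p * ε)) := by
    refine hausdorffMeasure_le_of_packing hp (Eventually.frequently ?_)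
    filter_upwards [eventually_sum_rpow_le_of_hasExcisionGain hP hW hfin hτ hτ₂ hc hgain hε,
      self_mem_nhdsWithin] with δ hsum hδ
    have hradius (x : E) (hx : x ∈ S) : ∃ r, 0 < r ∧ 2 * r ≤ δ ∧ τ / 2 < ballDensity μ W x r ∧
        ballDensity μ W x (2 * r) ≤ τ := by
      obtain ⟨r, hlow, hhigh, hr⟩ := (hx.2.and_eventually
        (tendsto_two_mul_nhdsGT_zero.eventually (hx.1.and (Ioc_mem_nhdsGT hδ)))).exists
      exact ⟨r, by linarith [hr.1], hr.2, hlow, hhigh⟩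
    choose! r hr0 hrδ hlow hhigh using hradius
    refine ⟨fun x => 2 * r x, fun x hx => ⟨by linarith [hr0 x hx], hrδ x hx⟩, fun F hF hdisj => ?_⟩
    calc ∑ x ∈ F, (2 * r x) ^ p = 2 ^ p * ∑ x ∈ F, r x ^ p := by
          rw [Finset.mul_sum]
          exact Finset.sum_congr rfl fun x hx => Real.mul_rpow zero_le_two (hr0 x (hF hx)).le
      _ ≤ 2 ^ p * ε := by
          gcongr
          exact hsum F r (fun x hx => hr0 x (hF hx)) (fun x hx => hrδ x (hF hx)) hdisj
            (fun x hx => (hlow x (hF hx)).le) fun x hx => hhigh x (hF hx)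
  refine nonpos_iff_eq_zero.1 (ENNReal.le_of_forall_pos_le_add fun ε hε _ => ?_)
  have := hbound (ε / (8 ^ p * 2 ^ p)) (by positivity)
  rwa [← mul_assoc, mul_div_cancel₀ _ (by positivity), ENNReal.ofReal_coe_nnreal,
    ← zero_add (ε : ℝ≥0∞)] at this

theorem exists_eventually_le_and_frequently_lt_of_not_tendsto {α : Type*} {l : Filter α}
    {f : α → ℝ} {κ : ℝ} (hf : ∀ a, 0 ≤ f a) (hκ : ∀ᶠ a in l, f a ≤ κ) (h : ¬Tendsto f l (𝓝 0)) :
    ∃ n : ℕ, (∀ᶠ a in l, f a ≤ κ / 2 ^ n) ∧ ∃ᶠ a in l, κ / 2 ^ n / 2 < f a := by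
  by_contra! hhalve
  have hle (n : ℕ) : ∀ᶠ a in l, f a ≤ κ / 2 ^ n := by
    induction n with
    | zero => simpa using hκ
    | succ n ih => simpa only [not_lt, pow_succ, div_mul_eq_div_div] using hhalve n ih
  refine h (tendsto_order.2 ⟨fun a ha => .of_forall fun b => ha.trans_le (hf b), fun a ha => ?_⟩)
  have hlim : Tendsto (fun n : ℕ => κ / 2 ^ n) atTop (𝓝 0) :=
    tendsto_const_nhds.div_atTop (tendsto_pow_atTop_atTop_of_one_lt one_lt_two)
  obtain ⟨n, hn⟩ := (hlim.eventually_lt_const ha).exists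
  exact (hle n).mono fun b hb => hb.trans_lt hn

variable (μ) in
theorem eventually_hausdorffMeasure_setOf_ballDensity_le_and_not_tendsto_eq_zero
    (hd : 0 < finrank ℝ E) :
    ∀ᶠ κ in 𝓝[>] (0 : ℝ), ∀ (W : Set E) (P : ℝ), MeasurableSet W → μ W ≠ ⊤ →
      HasRelaxedPerimeterLE μ W P →
      μH[(finrank ℝ E : ℝ) - 1] {x | (∀ᶠ r in 𝓝[>] 0, ballDensity μ W x r ≤ κ) ∧
        ¬Tendsto (ballDensity μ W x) (𝓝[>] 0) (𝓝 0)} = 0 := by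
  obtain ⟨τ₀, hτ₀, hgain⟩ :=
    mem_nhdsGT_iff_exists_Ioc_subset.1 (eventually_exists_hasExcisionGain μ hd)
  filter_upwards [Ioc_mem_nhdsGT (lt_min hτ₀ one_half_pos)] with κ ⟨hκ, hκle⟩ W P hW hfin hP
  refine measure_mono_null (fun x ⟨hx, hlim⟩ => mem_iUnion.2 <|
    exists_eventually_le_and_frequently_lt_of_not_tendsto (ballDensity_nonneg μ W x) hx hlim)
    (measure_iUnion_null fun n => ?_)
  have hκn : κ / 2 ^ n ≤ min τ₀ (1 / 2) :=
    (div_le_self hκ.le (one_le_pow₀ one_le_two)).trans hκle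
  obtain ⟨c, hc, hgain_c⟩ := hgain ⟨by positivity, hκn.trans (min_le_left _ _)⟩
  exact hausdorffMeasure_setOf_ballDensity_le_and_frequently_lt_eq_zero hd hP hW hfin
    (by positivity) (hκn.trans (min_le_right _ _)) hc hgain_c

end LowDensity

section Mollification

open ContinuousLinearMap (lsmul)
open scoped Convolution

variable {E F : Type*} [NormedAddCommGroup E] [NormedSpace ℝ E] [FiniteDimensional ℝ E]
  [MeasurableSpace E] [NormedAddCommGroup F] [NormedSpace ℝ F]

/-- The mollification of `g` by the normalized bump function `φ`. -/
def mollify (μ : Measure E) (φ : ContDiffBump (0 : E)) (g : E → F) : E → F :=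
  φ.normed μ ⋆[lsmul ℝ ℝ, μ] g

variable {μ : Measure E} {φ : ContDiffBump (0 : E)} {g : E → F} {W : Set E}

theorem continuous_fderiv_normed_apply (v : E) :
    Continuous fun x => fderiv ℝ (φ.normed μ) x v :=
  ((φ.contDiff_normed (n := 1)).continuous_fderiv one_ne_zero).clm_apply continuous_const

theorem fderiv_normed_neg_apply (x v : E) :
    fderiv ℝ (φ.normed μ) (-x) v = -fderiv ℝ (φ.normed μ) x v := by
  have heven : (fun y => φ.normed μ (-y)) = φ.normed μ := funext φ.normed_neg
  have hcomp : HasFDerivAt (fun y => φ.normed μ (-y))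
      ((fderiv ℝ (φ.normed μ) (-x)).comp (-ContinuousLinearMap.id ℝ E)) x :=
    ((φ.contDiff_normed (n := 1)).differentiable one_ne_zero (-x)).hasFDerivAt.comp x
      (hasFDerivAt_id x).neg
  rw [heven] at hcomp
  simp [hcomp.fderiv]

variable [BorelSpace E] [μ.IsAddHaarMeasure]

theorem mollify_apply (x : E) : mollify μ φ g x = ∫ t, φ.normed μ (x - t) • g t ∂μ :=
  convolution_lsmul_swap

theorem contDiff_mollify (hg : LocallyIntegrable g μ) : ContDiff ℝ 1 (mollify μ φ g) :=
  φ.hasCompactSupport_normed.contDiff_convolution_left (n := 1) _ φ.contDiff_normed hg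

theorem hasCompactSupport_mollify (hg : HasCompactSupport g) :
    HasCompactSupport (mollify μ φ g) :=
  φ.hasCompactSupport_normed.convolution _ hg

theorem norm_mollify_le_one (hg : ∀ x, ‖g x‖ ≤ 1) (x : E) : ‖mollify μ φ g x‖ ≤ 1 := by
  have hint : ∫ t, φ.normed μ (x - t) ∂μ = 1 := by
    rw [integral_sub_left_eq_self, φ.integral_normed]
  rw [mollify_apply, ← hint]
  refine norm_integral_le_of_norm_le (φ.integrable_normed.comp_sub_left x) (.of_forall fun t => ?_)
  rw [norm_smul, Real.norm_of_nonneg (φ.nonneg_normed _)]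
  exact mul_le_of_le_one_right (φ.nonneg_normed _) (hg t)

theorem fderiv_mollify_apply (hg : LocallyIntegrable g μ) (x v : E) :
    fderiv ℝ (mollify μ φ g) x v = ∫ t, fderiv ℝ (φ.normed μ) (x - t) v • g t ∂μ := by
  have hφ : ContDiff ℝ 1 (φ.normed μ) := φ.contDiff_normed (n := 1)
  rw [mollify, ← convolution_flip,
    (φ.hasCompactSupport_normed.hasFDerivAt_convolution_right _ hg hφ x).fderiv,
    convolution_precompR_apply _ hg (φ.hasCompactSupport_normed.fderiv ℝ)
      (hφ.continuous_fderiv one_ne_zero)]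
  rfl

theorem exists_norm_fderiv_normed_apply_le (μ : Measure E) [μ.IsAddHaarMeasure]
    (φ : ContDiffBump (0 : E)) (v : E) : ∃ C, ∀ x, ‖fderiv ℝ (φ.normed μ) x v‖ ≤ C :=
  (φ.hasCompactSupport_normed.fderiv_apply ℝ v).exists_bound_of_continuous
    (continuous_fderiv_normed_apply v)

theorem exists_norm_fderiv_mollify_apply_le (φ : ContDiffBump (0 : E)) (hg : Integrable g μ)
    (v : E) : ∃ C, ∀ x, ‖fderiv ℝ (mollify μ φ g) x v‖ ≤ C := by
  obtain ⟨C, hC⟩ := exists_norm_fderiv_normed_apply_le μ φ v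
  refine ⟨∫ t, C * ‖g t‖ ∂μ, fun x => ?_⟩
  rw [fderiv_mollify_apply hg.locallyIntegrable]
  refine norm_integral_le_of_norm_le (hg.norm.const_mul C) (.of_forall fun t => ?_)
  rw [norm_smul]
  exact mul_le_mul_of_nonneg_right (hC _) (norm_nonneg _)

theorem integrable_fderiv_mollify_apply_mul (φ : ContDiffBump (0 : E)) {g h : E → ℝ}
    (hg : Integrable g μ) (hh : Integrable h μ) (v : E) :
    Integrable (fun x => fderiv ℝ (mollify μ φ g) x v * h x) μ := by
  obtain ⟨C, hC⟩ := exists_norm_fderiv_mollify_apply_le φ hg v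
  refine hh.bdd_mul (c := C) (Continuous.aestronglyMeasurable ?_) (.of_forall hC)
  exact ((contDiff_mollify hg.locallyIntegrable).continuous_fderiv one_ne_zero).clm_apply
    continuous_const

theorem integral_fderiv_mollify_apply_mul (φ : ContDiffBump (0 : E)) {g h : E → ℝ}
    (hg : Integrable g μ) (hh : Integrable h μ) (v : E) :
    ∫ x, fderiv ℝ (mollify μ φ h) x v * g x ∂μ =
      -∫ y, fderiv ℝ (mollify μ φ g) y v * h y ∂μ := by
  have hint : Integrable (fun p : E × E =>
      fderiv ℝ (φ.normed μ) (p.1 - p.2) v * (g p.1 * h p.2)) (μ.prod μ) := by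
    obtain ⟨C, hC⟩ := exists_norm_fderiv_normed_apply_le μ φ v
    refine (hg.mul_prod hh).bdd_mul (c := C) ?_ (.of_forall fun p => hC _)
    exact ((continuous_fderiv_normed_apply v).comp
      (continuous_fst.sub continuous_snd)).aestronglyMeasurable
  calc ∫ x, fderiv ℝ (mollify μ φ h) x v * g x ∂μ
      = ∫ x, ∫ y, fderiv ℝ (φ.normed μ) (x - y) v * (g x * h y) ∂μ ∂μ := by
        refine integral_congr_ae (.of_forall fun x => ?_)
        dsimp only
        rw [fderiv_mollify_apply hh.locallyIntegrable, ← integral_mul_const]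
        exact integral_congr_ae (.of_forall fun y => by simp only [smul_eq_mul]; ring)
    _ = ∫ y, ∫ x, fderiv ℝ (φ.normed μ) (x - y) v * (g x * h y) ∂μ ∂μ :=
        integral_integral_swap hint
    _ = ∫ y, -(fderiv ℝ (mollify μ φ g) y v * h y) ∂μ := by
        refine integral_congr_ae (.of_forall fun y => ?_)
        dsimp only
        rw [fderiv_mollify_apply hg.locallyIntegrable, ← integral_mul_const, ← integral_neg]
        refine integral_congr_ae (.of_forall fun x => ?_)
        dsimp only
        rw [← neg_sub y x, fderiv_normed_neg_apply, smul_eq_mul]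
        ring
    _ = -∫ y, fderiv ℝ (mollify μ φ g) y v * h y ∂μ := integral_neg _

theorem isCutoff_mollify_indicator (hW : MeasurableSet W) (hb : Bornology.IsBounded W) :
    IsCutoff (mollify μ φ (W.indicator (1 : E → ℝ))) := by
  have hnonneg (x : E) : 0 ≤ mollify μ φ (W.indicator (1 : E → ℝ)) x := by
    rw [mollify_apply]
    exact integral_nonneg fun t =>
      smul_nonneg (φ.nonneg_normed _) (indicator_nonneg (fun _ _ => zero_le_one) t)
  have hle (x : E) : ‖W.indicator (1 : E → ℝ) x‖ ≤ 1 :=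
    (norm_indicator_le_norm_self _ x).trans_eq norm_one
  refine ⟨contDiff_mollify
    (integrable_indicator_one hW hb.measure_lt_top.ne).locallyIntegrable,
    hasCompactSupport_mollify (.of_support_subset_isCompact hb.isCompact_closure
      (support_indicator_subset.trans subset_closure)), fun x => ⟨hnonneg x, ?_⟩⟩
  exact (le_abs_self _).trans (norm_mollify_le_one hle x)

theorem mollify_indicator_eq_zero {x : E} (hφ : φ.rOut ≤ 1) (hx : x ∉ cthickening 1 W) :
    mollify μ φ (W.indicator (1 : E → ℝ)) x = 0 := by
  rw [mollify_apply, ← integral_zero E ℝ]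
  refine integral_congr_ae (.of_forall fun t => ?_)
  by_cases ht : t ∈ W
  · have hxt : x - t ∉ Function.support (φ.normed μ) := by
      rw [φ.support_normed_eq, mem_ball_zero_iff, ← dist_eq_norm]
      exact fun h => hx (mem_cthickening_of_dist_le x t 1 W ht (h.le.trans hφ))
    simp only [Function.notMem_support.1 hxt, zero_smul]
  · simp only [indicator_of_notMem ht, smul_zero]

theorem tendsto_indicatorDist_mollify {φ : ℕ → ContDiffBump (0 : E)} {K : ℝ}
    (hφ : Tendsto (fun n => (φ n).rOut) atTop (𝓝 0)) (hφK : ∀ n, (φ n).rOut ≤ K * (φ n).rIn)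
    (hW : MeasurableSet W) (hb : Bornology.IsBounded W) :
    Tendsto (fun n => indicatorDist μ (mollify μ (φ n) (W.indicator 1)) W) atTop (𝓝 0) := by
  have hfin : μ W ≠ ⊤ := hb.measure_lt_top.ne
  have hlim := tendsto_integral_filter_of_dominated_convergence (μ := μ) (l := atTop)
    (F := fun n x => ‖mollify μ (φ n) (W.indicator (1 : E → ℝ)) x - W.indicator 1 x‖)
    (f := fun _ => 0) ((cthickening 1 W).indicator 1)
    (.of_forall fun n => ((isCutoff_mollify_indicator hW hb).integrable_sub_indicator hW
      hfin).norm.aestronglyMeasurable) ?_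
    (integrable_indicator_one isClosed_cthickening.measurableSet hb.cthickening.measure_lt_top.ne)
    ?_
  · simpa only [integral_zero, indicatorDist] using hlim
  · filter_upwards [hφ.eventually (gt_mem_nhds one_pos)] with n hn
    refine .of_forall fun x => ?_
    rw [norm_norm]
    by_cases hx : x ∈ cthickening 1 W
    · have hu := (isCutoff_mollify_indicator (μ := μ) (φ := φ n) hW hb).mem_Icc x
      have h0 : 0 ≤ W.indicator (1 : E → ℝ) x := indicator_nonneg (fun _ _ => zero_le_one) x
      have h1 : W.indicator (1 : E → ℝ) x ≤ 1 := indicator_le_self' (fun _ _ => zero_le_one) x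
      rw [indicator_of_mem hx, Pi.one_apply, Real.norm_eq_abs, abs_le]
      constructor <;> linarith [hu.1, hu.2]
    · rw [mollify_indicator_eq_zero hn.le hx,
        indicator_of_notMem fun h => hx (self_subset_cthickening W h), indicator_of_notMem hx,
        sub_zero, norm_zero]
  · filter_upwards [ContDiffBump.ae_convolution_tendsto_right_of_locallyIntegrable hφ
      (.of_forall hφK) (integrable_indicator_one hW hfin).locallyIntegrable] with x hx
    exact tendsto_iff_norm_sub_tendsto_zero.1 hx

theorem exists_indicatorDist_mollify_le (hW : MeasurableSet W) (hb : Bornology.IsBounded W)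
    {η : ℝ} (hη : 0 < η) : ∃ φ : ContDiffBump (0 : E),
      indicatorDist μ (mollify μ φ (W.indicator 1)) W ≤ η := by
  let φ (n : ℕ) : ContDiffBump (0 : E) :=
    ⟨1 / (n + 1) / 2, 1 / (n + 1), by positivity, half_lt_self (by positivity)⟩
  have hφ (n : ℕ) : (φ n).rOut ≤ 2 * (φ n).rIn := (mul_div_cancel₀ _ two_ne_zero).ge
  obtain ⟨n, hn⟩ := ((tendsto_indicatorDist_mollify (μ := μ)
    tendsto_one_div_add_atTop_nhds_zero_nat hφ hW hb).eventually (gt_mem_nhds hη)).exists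
  exact ⟨φ n, hn.le⟩

end Mollification

section Duality

variable {X H : Type*} [TopologicalSpace X] [MeasurableSpace X] [OpensMeasurableSpace X]
  {μ : Measure X} [IsFiniteMeasureOnCompacts μ] [NormedAddCommGroup H] [InnerProductSpace ℝ H]

-- The test field `G / (‖G‖ + ε)` is continuous and gives `‖G‖ - ε ≤ ⟪G, G / (‖G‖ + ε)⟫`.
theorem integral_norm_le_of_forall_integral_inner_le {G : X → H} (hG : Continuous G)
    (hGs : HasCompactSupport G) {P : ℝ}
    (hP : ∀ ψ : X → H, Continuous ψ → HasCompactSupport ψ → (∀ x, ‖ψ x‖ ≤ 1) →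
      ∫ x, ⟪G x, ψ x⟫ ∂μ ≤ P) :
    ∫ x, ‖G x‖ ∂μ ≤ P := by
  refine le_of_forall_pos_le_mul_add (b := μ.real (tsupport G)) fun ε hε => ?_
  have hpos (x : X) : 0 < ‖G x‖ + ε := add_pos_of_nonneg_of_pos (norm_nonneg _) hε
  set ψ : X → H := fun x => (‖G x‖ + ε)⁻¹ • G x with hψdef
  have hψ : Continuous ψ := ((hG.norm.add_const ε).inv₀ fun x => (hpos x).ne').smul hG
  have hψs : HasCompactSupport ψ := hGs.smul_left
  have hψ1 (x : X) : ‖ψ x‖ ≤ 1 := by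
    rw [norm_smul, norm_inv, Real.norm_of_nonneg (hpos x).le, inv_mul_le_one₀ (hpos x)]
    exact le_add_of_nonneg_right hε.le
  have hK : MeasurableSet (tsupport G) := (isClosed_tsupport G).measurableSet
  have hind : Integrable ((tsupport G).indicator fun _ => ε) μ :=
    (integrable_indicator_iff hK).2 (integrableOn_const hGs.isCompact.measure_ne_top)
  have hinner : Integrable (fun x => ⟪G x, ψ x⟫) μ :=
    (hG.inner hψ).integrable_of_hasCompactSupport (hψs.mono fun x hx hx0 => hx (by
      simp only [hx0, inner_zero_right]))
  have hpoint (x : X) : ‖G x‖ ≤ (tsupport G).indicator (fun _ => ε) x + ⟪G x, ψ x⟫ := by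
    by_cases hx : x ∈ tsupport G
    · rw [indicator_of_mem hx, hψdef, real_inner_smul_right, real_inner_self_eq_norm_sq,
        ← sub_le_iff_le_add', ← div_eq_inv_mul, le_div_iff₀ (hpos x)]
      nlinarith [sq_nonneg ε]
    · simp [image_eq_zero_of_notMem_tsupport hx, indicator_of_notMem hx]
  calc ∫ x, ‖G x‖ ∂μ
      ≤ ∫ x, (tsupport G).indicator (fun _ => ε) x + ⟪G x, ψ x⟫ ∂μ :=
        integral_mono (hG.integrable_of_hasCompactSupport hGs).norm (hind.add hinner) hpoint
    _ = ε * μ.real (tsupport G) + ∫ x, ⟪G x, ψ x⟫ ∂μ := by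
        rw [integral_add hind hinner, integral_indicator hK, setIntegral_const, smul_eq_mul,
          mul_comm]
    _ ≤ ε * μ.real (tsupport G) + P := by gcongr; exact hP ψ hψ hψs hψ1

end Duality

section Perimeter

variable {m : ℕ} {V : Set (Euc m)}

theorem pdiv_mollify (φ : ContDiffBump (0 : Euc m)) {ψ : Euc m → Euc m} (hψ : Integrable ψ)
    (x : Euc m) : pdiv (mollify volume φ ψ) x =
      ∑ i, fderiv ℝ (mollify volume φ fun y => ψ y i) x (EuclideanSpace.single i 1) := by
  refine Finset.sum_congr rfl fun i _ => ?_
  obtain ⟨C, hC⟩ := exists_norm_fderiv_normed_apply_le volume φ (EuclideanSpace.single i 1)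
  have hint : Integrable fun y =>
      fderiv ℝ (φ.normed volume) (x - y) (EuclideanSpace.single i 1) • ψ y :=
    hψ.bdd_smul C ((continuous_fderiv_normed_apply _).comp
      (continuous_const.sub continuous_id)).aestronglyMeasurable (.of_forall fun y => hC _)
  have hψi : Integrable fun y => ψ y i := (EuclideanSpace.proj (𝕜 := ℝ) i).integrable_comp hψ
  rw [fderiv_mollify_apply hψ.locallyIntegrable, fderiv_mollify_apply hψi.locallyIntegrable,
    real_inner_comm, ← integral_inner hint]
  simp [inner_smul_right, EuclideanSpace.inner_single_left]

theorem setIntegral_pdiv_mollify (φ : ContDiffBump (0 : Euc m)) (hV : MeasurableSet V)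
    (hfin : volume V ≠ ⊤) {ψ : Euc m → Euc m} (hψ : Integrable ψ) :
    ∫ x in V, pdiv (mollify volume φ ψ) x =
      -∫ y, fderiv ℝ (mollify volume φ (V.indicator (1 : Euc m → ℝ))) y (ψ y) := by
  have hχ : Integrable (V.indicator (1 : Euc m → ℝ)) := integrable_indicator_one hV hfin
  have hψi (i : Fin m) : Integrable fun y => ψ y i :=
    (EuclideanSpace.proj (𝕜 := ℝ) i).integrable_comp hψ
  have hleft (x : Euc m) : V.indicator (pdiv (mollify volume φ ψ)) x =
      ∑ i, fderiv ℝ (mollify volume φ fun y => ψ y i) x (EuclideanSpace.single i 1) *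
        V.indicator (1 : Euc m → ℝ) x := by
    rw [← Finset.sum_mul, ← pdiv_mollify φ hψ]
    by_cases hx : x ∈ V <;> simp [hx]
  have hright (y : Euc m) :
      fderiv ℝ (mollify volume φ (V.indicator (1 : Euc m → ℝ))) y (ψ y) =
        ∑ i, fderiv ℝ (mollify volume φ (V.indicator (1 : Euc m → ℝ))) y
          (EuclideanSpace.single i 1) * ψ y i := by
    have hsum := (EuclideanSpace.basisFun (Fin m) ℝ).sum_repr (ψ y)
    simp only [EuclideanSpace.basisFun_repr, EuclideanSpace.basisFun_apply] at hsum
    conv_lhs => rw [← hsum, map_sum]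
    simp only [map_smul, smul_eq_mul, mul_comm]
  rw [← integral_indicator hV]
  simp only [hleft, hright]
  rw [integral_finsetSum _ fun i _ => integrable_fderiv_mollify_apply_mul φ (hψi i) hχ _,
    integral_finsetSum _ fun i _ => integrable_fderiv_mollify_apply_mul φ hχ (hψi i) _,
    ← Finset.sum_neg_distrib]
  exact Finset.sum_congr rfl fun i _ => integral_fderiv_mollify_apply_mul φ hχ (hψi i) _

theorem ofReal_neg_integral_fderiv_mollify_le_perimeter (φ : ContDiffBump (0 : Euc m))
    (hV : MeasurableSet V) (hfin : volume V ≠ ⊤) {ψ : Euc m → Euc m} (hψ : Continuous ψ)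
    (hψs : HasCompactSupport ψ) (hψ1 : ∀ x, ‖ψ x‖ ≤ 1) :
    ENNReal.ofReal (-∫ y, fderiv ℝ (mollify volume φ (V.indicator (1 : Euc m → ℝ))) y (ψ y)) ≤
      perimeter V univ := by
  have hint : Integrable ψ := hψ.integrable_of_hasCompactSupport hψs
  rw [← setIntegral_pdiv_mollify φ hV hfin hint]
  exact le_iSup_of_le _ <| le_iSup_of_le (contDiff_mollify hint.locallyIntegrable) <|
    le_iSup_of_le (hasCompactSupport_mollify hψs) <| le_iSup_of_le (subset_univ _) <|
    le_iSup_of_le (norm_mollify_le_one hψ1) le_rfl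

theorem totalVariation_mollify_indicator_le (φ : ContDiffBump (0 : Euc m)) (hV : MeasurableSet V)
    (hb : Bornology.IsBounded V) {P : ℝ} (hP0 : 0 ≤ P)
    (hP : perimeter V univ ≤ ENNReal.ofReal P) :
    totalVariation volume (mollify volume φ (V.indicator (1 : Euc m → ℝ))) ≤ P := by
  set u := mollify volume φ (V.indicator (1 : Euc m → ℝ)) with hu
  have hcut : IsCutoff u := isCutoff_mollify_indicator hV hb
  set grad : Euc m → Euc m := fun x => (InnerProductSpace.toDual ℝ (Euc m)).symm (fderiv ℝ u x)
  have hgrad : totalVariation volume u = ∫ x, ‖grad x‖ := by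
    simp only [totalVariation, grad, LinearIsometryEquiv.norm_map]
  rw [hgrad]
  refine integral_norm_le_of_forall_integral_inner_le
    ((InnerProductSpace.toDual ℝ (Euc m)).symm.continuous.comp hcut.continuous_fderiv)
    ((hcut.hasCompactSupport.fderiv ℝ).comp_left (map_zero _)) fun ψ hψ hψs hψ1 => ?_
  have hneg := ofReal_neg_integral_fderiv_mollify_le_perimeter φ hV hb.measure_lt_top.ne hψ.neg
    hψs.neg fun x => (norm_neg _).trans_le (hψ1 x)
  have hle := (ENNReal.ofReal_le_ofReal_iff hP0).1 (hneg.trans hP)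
  simpa only [← hu, Function.comp_apply, Pi.neg_apply, map_neg, integral_neg, neg_neg, grad,
    InnerProductSpace.toDual_symm_apply] using hle

theorem hasRelaxedPerimeterLE_of_perimeter_le (hV : MeasurableSet V)
    (hb : Bornology.IsBounded V) {P : ℝ} (hP0 : 0 ≤ P)
    (hP : perimeter V univ ≤ ENNReal.ofReal P) : HasRelaxedPerimeterLE volume V P := by
  intro η hη
  obtain ⟨φ, hφ⟩ := exists_indicatorDist_mollify_le (μ := volume) hV hb hη
  exact ⟨_, isCutoff_mollify_indicator hV hb, hφ,
    totalVariation_mollify_indicator_le φ hV hb hP0 hP⟩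

end Perimeter

section ExteriorDensity

open Module (finrank)

theorem eventually_exists_closedBall_subset_setOf_lt {E : Type*} [NormedAddCommGroup E]
    [NormedSpace ℝ E] {f : E → ℝ} {L : E →L[ℝ] ℝ} {x : E} (hf : HasFDerivAt f L x)
    (hL : L ≠ 0) :
    ∀ᶠ r in 𝓝[>] (0 : ℝ), ∃ z, closedBall z (r / 4) ⊆ closedBall x r ∩ {y | f x < f y} := by
  have hL0 : 0 < ‖L‖ := norm_pos_iff.2 hL
  obtain ⟨w, hw, hLw⟩ : ∃ w, ‖w‖ < 1 ∧ 3 / 4 * ‖L‖ < L w := by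
    obtain ⟨w, hw, hLw⟩ := L.exists_lt_apply_of_lt_opNorm (r := 3 / 4 * ‖L‖) (by linarith)
    rcases lt_abs.1 hLw with h | h
    · exact ⟨w, hw, h⟩
    · exact ⟨-w, (norm_neg w).trans_lt hw, h.trans_eq (map_neg L w).symm⟩
  have herr : ∀ᶠ y in 𝓝 x, ‖f y - f x - L (y - x)‖ ≤ ‖L‖ / 8 * ‖y - x‖ :=
    hf.isLittleO.def (by positivity)
  filter_upwards [nhdsWithin_le_nhds (eventually_closedBall_subset herr),
    self_mem_nhdsWithin] with r hr hr0
  replace hr0 : 0 < r := hr0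
  refine ⟨x + (r / 2) • w, fun y hy => ?_⟩
  set e := y - (x + (r / 2) • w) with he
  have hyx : y - x = e + (r / 2) • w := by rw [he]; abel
  have hen : ‖e‖ ≤ r / 4 := by rwa [mem_closedBall, dist_eq_norm] at hy
  have hnorm : ‖y - x‖ ≤ 3 / 4 * r := by
    rw [hyx]
    refine (norm_add_le _ _).trans ?_
    rw [norm_smul, Real.norm_of_nonneg (by positivity)]
    nlinarith
  have hyr : y ∈ closedBall x r := by rw [mem_closedBall, dist_eq_norm]; linarith
  have hlin : ‖L‖ / 8 * r < L (y - x) := by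
    have hLe : -(‖L‖ * (r / 4)) ≤ L e :=
      (abs_le.1 ((L.le_opNorm e).trans (mul_le_mul_of_nonneg_left hen hL0.le))).1
    rw [hyx, map_add, map_smul, smul_eq_mul]
    nlinarith
  have hrem : -(‖L‖ / 8 * ‖y - x‖) ≤ f y - f x - L (y - x) := (abs_le.1 (hr hyr)).1
  refine ⟨hyr, show f x < f y from ?_⟩
  nlinarith

variable {E : Type*} [NormedAddCommGroup E] [NormedSpace ℝ E] [FiniteDimensional ℝ E]
  [MeasurableSpace E] [BorelSpace E] (μ : Measure E) [μ.IsAddHaarMeasure]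

theorem ballDensity_le_of_closedBall_subset {V : Set E} (hV : MeasurableSet V) {x z : E}
    {r c : ℝ} (hr : 0 < r) (hc : 0 ≤ c) (h : closedBall z (c * r) ⊆ closedBall x r \ V) :
    ballDensity μ V x r ≤ 1 - c ^ finrank ℝ E := by
  have hle := measureReal_mono (μ := μ) h
    (measure_ne_top_of_subset sdiff_subset measure_closedBall_lt_top.ne)
  rw [measureReal_closedBall_sdiff μ hV x hr, Measure.addHaar_real_closedBall' μ z (by positivity),
    mul_pow, mul_assoc, ← Measure.addHaar_real_closedBall' μ x hr.le] at hle
  linarith [le_of_mul_le_mul_right hle (measureReal_closedBall_pos μ x hr)]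

theorem IsSmoothSet.eventually_ballDensity_le {m : ℕ} {V : Set (Euc m)} (hV : IsSmoothSet V)
    {x : Euc m} (hx : x ∉ V) :
    ∀ᶠ r in 𝓝[>] 0, ballDensity volume V x r ≤ 1 - (1 / 4) ^ m := by
  obtain ⟨hVo, -, hVf⟩ := hV
  suffices hball : ∀ᶠ r in 𝓝[>] (0 : ℝ), ∃ z, closedBall z (r / 4) ⊆ closedBall x r \ V by
    filter_upwards [hball, self_mem_nhdsWithin] with r ⟨z, hz⟩ hr
    rw [div_eq_mul_one_div, mul_comm] at hz
    simpa only [finrank_euclideanSpace_fin] using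
      ballDensity_le_of_closedBall_subset volume hVo.measurableSet hr (by norm_num) hz
  by_cases hxV : x ∈ closure V
  · obtain ⟨W, f, hW, hxW, hf, hf0, hVW⟩ := hVf x (hVo.frontier_eq ▸ ⟨hxV, hx⟩)
    have hfx : 0 ≤ f x := not_lt.1 fun h => hx (hVW.superset ⟨h, hxW⟩).1
    have hfd : HasFDerivAt f (fderiv ℝ f x) x := (hf.differentiable (by simp) x).hasFDerivAt
    filter_upwards [eventually_exists_closedBall_subset_setOf_lt hfd (hf0 x hxW),
      nhdsWithin_le_nhds (eventually_closedBall_subset (hW.mem_nhds hxW))] with r ⟨z, hz⟩ hr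
    refine ⟨z, fun y hy => ⟨(hz hy).1, fun hyV => ?_⟩⟩
    exact (hfx.trans_lt (hz hy).2).not_gt (hVW.subset ⟨hyV, hr (hz hy).1⟩).1
  · have hev := eventually_closedBall_subset (isClosed_closure.isOpen_compl.mem_nhds hxV)
    filter_upwards [nhdsWithin_le_nhds hev, self_mem_nhdsWithin] with r hr hr0
    have hr4 : r / 4 ≤ r := div_le_self (mem_Ioi.1 hr0).le (by norm_num)
    exact ⟨x, fun y hy => ⟨closedBall_subset_closedBall hr4 hy, fun hyV =>
      hr (closedBall_subset_closedBall hr4 hy) (subset_closure hyV)⟩⟩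

end ExteriorDensity

section NonExterior

open Module (finrank)

variable {E : Type*} [NormedAddCommGroup E] [NormedSpace ℝ E] [FiniteDimensional ℝ E]
  [MeasurableSpace E] [BorelSpace E] {μ : Measure E} [μ.IsAddHaarMeasure] {A W : Set E} {P κ : ℝ}

theorem exists_ballDensity_mem_Icc {x : E} {δ r s : ℝ} (hκ : κ ≤ 1 / 2) (hr : r ∈ Ioc 0 δ)
    (hs : s ∈ Ioc 0 δ) (hle : κ ≤ ballDensity μ W x r) (hge : ballDensity μ W x s ≤ 1 - κ) :
    ∃ t ∈ Ioc 0 δ, ballDensity μ W x t ∈ Icc κ (1 - κ) := by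
  by_cases hsκ : κ ≤ ballDensity μ W x s
  · exact ⟨s, hs, hsκ, hge⟩
  · obtain ⟨t, ht, htκ⟩ := isPreconnected_Ioc.intermediate_value hs hr
      ((continuousOn_ballDensity μ W x).mono Ioc_subset_Ioi_self) ⟨(not_le.1 hsκ).le, hle⟩
    exact ⟨t, ht, htκ.ge, by linarith⟩

theorem hausdorffMeasure_le_of_frequently_exists_ballDensity_mem_Icc (hd : 0 < finrank ℝ E)
    (hκ : 0 < κ) {S : Set E}
    (h : ∃ᶠ δ in 𝓝[>] (0 : ℝ), ∃ W, MeasurableSet W ∧ μ W ≠ ⊤ ∧ HasRelaxedPerimeterLE μ W P ∧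
      ∀ x ∈ S, ∃ r ∈ Ioc 0 δ, ballDensity μ W x r ∈ Icc κ (1 - κ)) :
    μH[(finrank ℝ E : ℝ) - 1] S ≤ ENNReal.ofReal (8 ^ ((finrank ℝ E : ℝ) - 1) *
      (2 ^ (finrank ℝ E + 1) * P / (κ ^ 2 * μ.real (closedBall (0 : E) 1)))) := by
  have hd1 : (1 : ℝ) ≤ finrank ℝ E := by exact_mod_cast hd
  refine hausdorffMeasure_le_of_packing (by linarith) (h.mono ?_)
  rintro δ ⟨W, hW, hfin, hP, hdens⟩
  choose! r hr hrκ using hdens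
  exact ⟨r, hr, fun F hFS hdisj => hP.sum_rpow_le hW hfin hκ (fun x hx => (hr x (hFS hx)).1) hdisj
    fun x hx => hrκ x (hFS hx)⟩

theorem HasRelaxedPerimeterLE.hausdorffMeasure_setOf_frequently_lt_top (hd : 0 < finrank ℝ E)
    (hP : HasRelaxedPerimeterLE μ W P) (hW : MeasurableSet W) (hfin : μ W ≠ ⊤) (hκ : 0 < κ)
    (hκ2 : κ ≤ 1 / 2) :
    μH[(finrank ℝ E : ℝ) - 1] {x | (∃ᶠ r in 𝓝[>] 0, κ ≤ ballDensity μ W x r) ∧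
      ∃ᶠ r in 𝓝[>] 0, ballDensity μ W x r ≤ 1 - κ} < ⊤ := by
  refine (hausdorffMeasure_le_of_frequently_exists_ballDensity_mem_Icc (μ := μ) (P := P) hd hκ
    (Eventually.frequently ?_)).trans_lt ENNReal.ofReal_lt_top
  filter_upwards [self_mem_nhdsWithin] with δ hδ
  refine ⟨W, hW, hfin, hP, fun x hx => ?_⟩
  obtain ⟨r, hrκ, hr⟩ := (hx.1.and_eventually (Ioc_mem_nhdsGT hδ)).exists
  obtain ⟨s, hsκ, hs⟩ := (hx.2.and_eventually (Ioc_mem_nhdsGT hδ)).exists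
  exact exists_ballDensity_mem_Icc hκ2 hr hs hrκ hsκ

variable {ι : Type*} {V : ι → Set E}

-- At a small scale `δ` the set `V i` is dense around every point under consideration as soon as `i`
-- is chosen, uniformly in the point, with `μ (A \ V i)` small compared to the ball of radius `δ`.
theorem hausdorffMeasure_setOf_forall_frequently_and_forall_Ioc_le (hd : 0 < finrank ℝ E)
    (hA : μ A ≠ ⊤) (hVm : ∀ i, MeasurableSet (V i)) (hVfin : ∀ i, μ (V i) ≠ ⊤)
    (hV : ∀ i, HasRelaxedPerimeterLE μ (V i) P) (hAV : ∀ η > 0, ∃ i, μ.real (A \ V i) ≤ η)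
    (hκ : 0 < κ) (hκ3 : κ ≤ 1 / 3) {ε : ℝ} (hε : 0 < ε) :
    μH[(finrank ℝ E : ℝ) - 1] {x | (∀ i, ∃ᶠ r in 𝓝[>] 0, ballDensity μ (V i) x r ≤ 1 - κ) ∧
      ∀ r ∈ Ioc 0 ε, 1 - κ < ballDensity μ A x r} ≤
    ENNReal.ofReal (8 ^ ((finrank ℝ E : ℝ) - 1) *
      (2 ^ (finrank ℝ E + 1) * P / (κ ^ 2 * μ.real (closedBall (0 : E) 1)))) := by
  refine hausdorffMeasure_le_of_frequently_exists_ballDensity_mem_Icc hd hκ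
    (Eventually.frequently ?_)
  filter_upwards [Ioc_mem_nhdsGT hε] with δ hδ
  obtain ⟨i, hi⟩ := hAV (κ * μ.real (closedBall (0 : E) δ))
    (mul_pos hκ (measureReal_closedBall_pos μ 0 hδ.1))
  refine ⟨V i, hVm i, hVfin i, hV i, fun x hx => ?_⟩
  have hball : μ.real (closedBall x δ) = μ.real (closedBall 0 δ) := by
    rw [measureReal_def, Measure.addHaar_closedBall_center, measureReal_def]
  have hdens : ballDensity μ A x δ ≤ ballDensity μ (V i) x δ + κ :=
    ballDensity_le_add_of_measureReal_sdiff_le μ hδ.1 (measure_ne_top_of_subset sdiff_subset hA)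
      (hball ▸ hi)
  obtain ⟨s, hsκ, hs⟩ := ((hx.1 i).and_eventually (Ioc_mem_nhdsGT hδ.1)).exists
  exact exists_ballDensity_mem_Icc (by linarith) ⟨hδ.1, le_rfl⟩ hs (by linarith [hx.2 δ hδ]) hsκ

theorem hausdorffMeasure_setOf_forall_frequently_and_eventually_lt_top (hd : 0 < finrank ℝ E)
    (hA : μ A ≠ ⊤) (hVm : ∀ i, MeasurableSet (V i)) (hVfin : ∀ i, μ (V i) ≠ ⊤)
    (hV : ∀ i, HasRelaxedPerimeterLE μ (V i) P) (hAV : ∀ η > 0, ∃ i, μ.real (A \ V i) ≤ η)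
    (hκ : 0 < κ) (hκ3 : κ ≤ 1 / 3) :
    μH[(finrank ℝ E : ℝ) - 1] {x | (∀ i, ∃ᶠ r in 𝓝[>] 0, ballDensity μ (V i) x r ≤ 1 - κ) ∧
      ∀ᶠ r in 𝓝[>] 0, 1 - κ < ballDensity μ A x r} < ⊤ := by
  let S (n : ℕ) : Set E := {x | (∀ i, ∃ᶠ r in 𝓝[>] 0, ballDensity μ (V i) x r ≤ 1 - κ) ∧
    ∀ r ∈ Ioc (0 : ℝ) (1 / (n + 1)), 1 - κ < ballDensity μ A x r}
  have hmono : Monotone S := fun n k hnk x hx =>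
    ⟨hx.1, fun r hr => hx.2 r ⟨hr.1, hr.2.trans (Nat.one_div_le_one_div hnk)⟩⟩
  refine (measure_mono (t := ⋃ n, S n) ?_).trans_lt ?_
  · rintro x ⟨hx, hxA⟩
    obtain ⟨δ, hδ, hδA⟩ := mem_nhdsGT_iff_exists_Ioc_subset.1 hxA
    obtain ⟨n, hn⟩ := exists_nat_one_div_lt (mem_Ioi.1 hδ)
    exact mem_iUnion.2 ⟨n, hx, fun r hr => hδA ⟨hr.1, hr.2.trans hn.le⟩⟩
  rw [hmono.measure_iUnion]
  exact (iSup_le fun n => hausdorffMeasure_setOf_forall_frequently_and_forall_Ioc_le hd hA hVm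
    hVfin hV hAV hκ hκ3 Nat.one_div_pos_of_nat).trans_lt ENNReal.ofReal_lt_top

theorem hausdorffMeasure_setOf_not_tendsto_ballDensity_lt_top (hd : 0 < finrank ℝ E)
    (hA : MeasurableSet A) (hAfin : μ A ≠ ⊤) (hVm : ∀ i, MeasurableSet (V i))
    (hVfin : ∀ i, μ (V i) ≠ ⊤) (hV : ∀ i, HasRelaxedPerimeterLE μ (V i) P)
    (hAV : ∀ η > 0, ∃ i, μ.real (V i ∆ A) ≤ η) {θ : ℝ} (hθ : 0 < θ) :
    μH[(finrank ℝ E : ℝ) - 1] {x | (∀ i, ∃ᶠ r in 𝓝[>] 0, ballDensity μ (V i) x r ≤ 1 - θ) ∧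
      ¬Tendsto (ballDensity μ A x) (𝓝[>] 0) (𝓝 0)} < ⊤ := by
  have hP : HasRelaxedPerimeterLE μ A P :=
    .of_forall_exists_measureReal_symmDiff_le hA hAfin hVm hVfin hV hAV
  have hAV' (η : ℝ) (hη : 0 < η) : ∃ i, μ.real (A \ V i) ≤ η :=
    (hAV η hη).imp fun i => (measureReal_mono subset_union_right
      (measure_symmDiff_ne_top (hVfin i) hAfin)).trans
  obtain ⟨κ, hnull, hκ, hκle⟩ :=
    ((eventually_hausdorffMeasure_setOf_ballDensity_le_and_not_tendsto_eq_zero μ hd).and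
      (Ioc_mem_nhdsGT (lt_min hθ (by norm_num : (0 : ℝ) < 1 / 3)))).exists
  have hκθ : κ ≤ θ := hκle.trans (min_le_left _ _)
  have hκ3 : κ ≤ 1 / 3 := hκle.trans (min_le_right _ _)
  have hmixed := hP.hausdorffMeasure_setOf_frequently_lt_top hd hA hAfin hκ (by linarith)
  have hdense := hausdorffMeasure_setOf_forall_frequently_and_eventually_lt_top hd hAfin hVm hVfin
    hV hAV' hκ hκ3
  have hsparse := (hnull A P hA hAfin hP).trans_lt ENNReal.zero_lt_top
  refine (measure_mono ?_).trans_lt (measure_union_lt_top (measure_union_lt_top hmixed hdense)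
    hsparse)
  rintro x ⟨hx, hlim⟩
  by_cases hlow : ∃ᶠ r in 𝓝[>] 0, κ ≤ ballDensity μ A x r
  · by_cases hhigh : ∃ᶠ r in 𝓝[>] 0, ballDensity μ A x r ≤ 1 - κ
    · exact .inl (.inl ⟨hlow, hhigh⟩)
    · exact .inl (.inr ⟨fun i => (hx i).mono fun r hr => by linarith,
        (not_frequently.1 hhigh).mono fun r hr => not_le.1 hr⟩)
  · exact .inr ⟨(not_frequently.1 hlow).mono fun r hr => (not_le.1 hr).le, hlim⟩

end NonExterior

section Approximation

variable {m : ℕ} {A : Set (Euc m)}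

theorem mem_extMeas_iff {x : Euc m} :
    x ∈ extMeas A ↔ Tendsto (ballDensity volume A x) (𝓝[>] 0) (𝓝 0) := by
  have hne (r : ℝ) : volume (A ∩ closedBall x r) / volume (closedBall x r) ≠ ⊤ :=
    ((ENNReal.div_le_of_le_mul' (by simpa using measure_mono inter_subset_right)).trans_lt
      ENNReal.one_lt_top).ne
  have hreal : ballDensity volume A x =
      fun r => (volume (A ∩ closedBall x r) / volume (closedBall x r)).toReal :=
    funext fun r => (ENNReal.toReal_div _ _).symm
  rw [hreal, ← ENNReal.toReal_zero, ENNReal.tendsto_toReal_iff hne ENNReal.zero_ne_top]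
  rfl

theorem extMeas_congr {B : Set (Euc m)} (h : A =ᵐ[volume] B) : extMeas A = extMeas B := by
  have hball (x : Euc m) (r : ℝ) : volume (A ∩ closedBall x r) = volume (B ∩ closedBall x r) :=
    measure_congr (h.inter (ae_eq_refl _))
  simp only [extMeas, hball]

variable {ι : Type*} {l : Filter ι} [l.NeBot] {V : ι → Set (Euc m)}

theorem iUnion_ae_eq_of_tendsto_measure_symmDiff (hVA : ∀ i, V i ⊆ A)
    (hconv : Tendsto (fun i => volume (V i ∆ A)) l (𝓝 0)) : ⋃ i, V i =ᵐ[volume] A := by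
  have hnull : volume (A \ ⋃ i, V i) = 0 :=
    le_antisymm (ge_of_tendsto' hconv fun i => measure_mono fun x hx =>
      .inr ⟨hx.1, fun h => hx.2 (mem_iUnion_of_mem i h)⟩) zero_le
  exact (iUnion_subset hVA).eventuallyLE.antisymm (ae_le_set.2 hnull)

theorem finite_nonexterior_boundary_of_approximation_general (hVo : ∀ i, IsOpen (V i))
    (hb : ∀ i, Bornology.IsBounded (V i)) (hVA : ∀ i, V i ⊆ A) {θ : ℝ} (hθ : 0 < θ)
    (hdens : ∀ i, ∀ x ∉ V i, ∃ᶠ r in 𝓝[>] 0, ballDensity volume (V i) x r ≤ 1 - θ)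
    (hper : ⨆ i, perimeter (V i) univ < ⊤)
    (hconv : Tendsto (fun i => volume (V i ∆ A)) l (𝓝 0)) :
    μH[(m : ℝ) - 1] (frontier A \ extMeas A) < ⊤ := by
  rcases Nat.eq_zero_or_pos m with rfl | hm
  · simp
  have hUA : ⋃ i, V i =ᵐ[volume] A := iUnion_ae_eq_of_tendsto_measure_symmDiff hVA hconv
  have hsymm (i : ι) : volume (V i ∆ ⋃ j, V j) = volume (V i ∆ A) :=
    measure_congr ((ae_eq_refl _).symmDiff hUA)
  have hUfin : volume (⋃ i, V i) ≠ ⊤ := by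
    obtain ⟨i, hi⟩ := (hconv.eventually_lt_const ENNReal.zero_lt_top).exists
    exact (measure_ne_top_iff_of_symmDiff (hsymm i ▸ hi.ne)).1 (hb i).measure_lt_top.ne
  have happrox (η : ℝ) (hη : 0 < η) : ∃ i, volume.real (V i ∆ ⋃ j, V j) ≤ η := by
    obtain ⟨i, hi⟩ := (hconv.eventually_lt_const (ENNReal.ofReal_pos.2 hη)).exists
    exact ⟨i, ENNReal.toReal_le_of_le_ofReal hη.le ((hsymm i).trans_le hi.le)⟩
  have hV (i : ι) : HasRelaxedPerimeterLE volume (V i) (⨆ j, perimeter (V j) univ).toReal :=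
    hasRelaxedPerimeterLE_of_perimeter_le (hVo i).measurableSet (hb i) ENNReal.toReal_nonneg
      ((le_iSup (fun j => perimeter (V j) univ) i).trans_eq (ENNReal.ofReal_toReal hper.ne).symm)
  have hfin := hausdorffMeasure_setOf_not_tendsto_ballDensity_lt_top (μ := volume)
    (by rwa [finrank_euclideanSpace_fin]) (isOpen_iUnion hVo).measurableSet hUfin
    (fun i => (hVo i).measurableSet) (fun i => (hb i).measure_lt_top.ne) hV happrox hθ
  rw [finrank_euclideanSpace_fin] at hfin
  refine (measure_mono ?_).trans_lt hfin
  refine fun x hx => ⟨fun i => hdens i x fun hxV => ?_, ?_⟩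
  · exact hx.1.2 (interior_maximal (hVA i) (hVo i) hxV)
  · rw [← mem_extMeas_iff, extMeas_congr hUA]
    exact hx.2

end Approximation

/-- **Proposition 4.3, first part**: if a set `A` of finite positive Lebesgue measure is
approximated in `L_1(ℝ^m)` by a net of smooth sets compactly contained in `A` with
uniformly bounded perimeter, then the non-exterior boundary `∂A \ ext_* A` has finite
`(m-1)`-dimensional Hausdorff measure. -/
theorem finite_nonexterior_boundary_of_approximation {m : ℕ} (A : Set (Euc m))
    (h0 : 0 < volume A) (h1 : volume A < ⊤)
    (D : DirIdx) (V : D.ι → Set (Euc m))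
    (hsm : ∀ α, IsSmoothSet (V α) ∧ closure (V α) ⊆ A ∧ IsCompact (closure (V α)))
    (hper : (⨆ α, perimeter (V α) Set.univ) < ⊤)
    (hconv : Tendsto (fun α => volume ((V α) ∆ A)) atTop (𝓝 0)) :
    (μH[(m : ℝ) - 1] : Measure (Euc m)) (frontier A \ extMeas A) < ⊤ :=
  finite_nonexterior_boundary_of_approximation_general (fun α => (hsm α).1.1)
    (fun α => (hsm α).1.2.1) (fun α => subset_closure.trans (hsm α).2.1) (by positivity)
    (fun α _ hx => ((hsm α).1.eventually_ballDensity_le hx).frequently) hper hconv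

end
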